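/- arXiv:2007.16033 — 3 statements merged into one kernel-verified Lean document; each statement's English description precedes it below -/
import Mathlib

section
/- Let L be an even positive definite lattice of rank l, let G be a subgroup of O(L), and let φ_j be a G-invariant weak Jacobi form of weight k_j and index m_j associated to L for 1 ≤ j ≤ l+1. Then the Jacobian J(φ_1,…,φ_{l+1}) is a weak Jacobi form of weight l + Σ_{j=1}^{l+1} k_j and index Σ_{j=1}^{l+1} m_j associated to L, and it satisfies J(τ, σ(z)) = det(σ) · J(τ, z) for every σ ∈ G. -/
open Complex Matrix

noncomputable section

/-- The ℂ-bilinear pairing on `ℂ^l` induced by an integral Gram matrix `M`. -/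
def pairC {l : ℕ} (M : Matrix (Fin l) (Fin l) ℤ) (v w : Fin l → ℂ) : ℂ :=
  ∑ i, ∑ j, v i * (M i j : ℂ) * w j

/-- The ℚ-bilinear pairing on `ℚ^l` induced by an integral Gram matrix `M`. -/
def pairQ {l : ℕ} (M : Matrix (Fin l) (Fin l) ℤ) (v w : Fin l → ℚ) : ℚ :=
  ∑ i, ∑ j, v i * (M i j : ℚ) * w j

def zc {l : ℕ} (x : Fin l → ℤ) : Fin l → ℂ := fun i => (x i : ℂ)
def qc {l : ℕ} (x : Fin l → ℚ) : Fin l → ℂ := fun i => (x i : ℂ)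

/-- `M` is the Gram matrix of an even positive definite lattice. -/
structure IsEvenPosDef {l : ℕ} (M : Matrix (Fin l) (Fin l) ℤ) : Prop where
  symm : M.IsSymm
  even_diag : ∀ i, Even (M i i)
  posDef : (M.map (Int.cast : ℤ → ℝ)).PosDef

/-- `G` is a subgroup of the integral orthogonal group `O(L)` of the lattice with
Gram matrix `M`. -/
structure IsOrthSubgroup {l : ℕ} (M : Matrix (Fin l) (Fin l) ℤ)
    (G : Set (Matrix (Fin l) (Fin l) ℤ)) : Prop where
  one_mem : 1 ∈ G
  mul_mem : ∀ σ₁ ∈ G, ∀ σ₂ ∈ G, σ₁ * σ₂ ∈ G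
  inv_mem : ∀ σ ∈ G, ∃ σ' ∈ G, σ * σ' = 1 ∧ σ' * σ = 1
  isometry : ∀ σ ∈ G, σᵀ * M * σ = M

/-- `ℓ ∈ L^*`, the dual lattice. -/
def InDual {l : ℕ} (M : Matrix (Fin l) (Fin l) ℤ) (ℓ : Fin l → ℚ) : Prop :=
  ∀ x : Fin l → ℤ, ∃ n : ℤ, pairQ M ℓ (fun i => (x i : ℚ)) = n

/-- `c` is a family of Fourier coefficients, supported on `n ≥ 0` and `ℓ ∈ L^*`,
whose associated Fourier series converges to `φ` on `ℍ × (L ⊗ ℂ)`. -/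
def FourierRep {l : ℕ} (M : Matrix (Fin l) (Fin l) ℤ) (φ : ℂ → (Fin l → ℂ) → ℂ)
    (c : ℕ → (Fin l → ℚ) → ℂ) : Prop :=
  (∀ n ℓ, c n ℓ ≠ 0 → InDual M ℓ) ∧
  ∀ τ : ℂ, 0 < τ.im → ∀ z : Fin l → ℂ,
    HasSum (fun p : ℕ × (Fin l → ℚ) =>
      c p.1 p.2 * Complex.exp (2 * (Real.pi : ℂ) * Complex.I *
        ((p.1 : ℂ) * τ + pairC M (qc p.2) z))) (φ τ z)

/-- `φ` is a weak Jacobi form of weight `k` and index `t` associated to the even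
positive definite lattice with Gram matrix `M`. -/
def IsWeakJacobiForm {l : ℕ} (M : Matrix (Fin l) (Fin l) ℤ) (k : ℤ) (t : ℕ)
    (φ : ℂ → (Fin l → ℂ) → ℂ) : Prop :=
  (DifferentiableOn ℂ (fun p : ℂ × (Fin l → ℂ) => φ p.1 p.2)
    ({τ : ℂ | 0 < τ.im} ×ˢ (Set.univ : Set (Fin l → ℂ)))) ∧
  (∀ a b c d : ℤ, a * d - b * c = 1 → ∀ τ : ℂ, 0 < τ.im → ∀ z : Fin l → ℂ,
    φ (((a : ℂ) * τ + (b : ℂ)) / ((c : ℂ) * τ + (d : ℂ)))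
        (fun i => z i / ((c : ℂ) * τ + (d : ℂ))) =
      ((c : ℂ) * τ + (d : ℂ)) ^ k *
        Complex.exp ((t : ℂ) * (Real.pi : ℂ) * Complex.I * (c : ℂ) *
          pairC M z z / ((c : ℂ) * τ + (d : ℂ))) * φ τ z) ∧
  (∀ x y : Fin l → ℤ, ∀ τ : ℂ, 0 < τ.im → ∀ z : Fin l → ℂ,
    φ τ (fun i => z i + (x i : ℂ) * τ + (y i : ℂ)) =
      Complex.exp (-(t : ℂ) * (Real.pi : ℂ) * Complex.I *
        (pairC M (zc x) (zc x) * τ + 2 * pairC M (zc x) z)) * φ τ z) ∧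
  (∃ c : ℕ → (Fin l → ℚ) → ℂ, FourierRep M φ c)

/-- `φ` is invariant under the action of `G` on the lattice variable. -/
def GInvariant {l : ℕ} (G : Set (Matrix (Fin l) (Fin l) ℤ))
    (φ : ℂ → (Fin l → ℂ) → ℂ) : Prop :=
  ∀ σ ∈ G, ∀ τ : ℂ, 0 < τ.im → ∀ z : Fin l → ℂ,
    φ τ ((σ.map (Int.cast : ℤ → ℂ)).mulVec z) = φ τ z

/-- The partial derivative of `φ(τ, 𝔷)` in the `i`-th coordinate of the lattice
variable `𝔷`. -/
def pderiv' {l : ℕ} (i : Fin l) (φ : ℂ → (Fin l → ℂ) → ℂ) (τ : ℂ) (z : Fin l → ℂ) : ℂ :=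
  deriv (fun w : ℂ => φ τ (Function.update z i w)) (z i)

/-- The Jacobian `J(φ_1, ..., φ_{l+1})` of `l+1` Jacobi forms of indices `m j`:
the determinant of the matrix whose first row is `(m_j φ_j)_j` and whose later
rows are the partial derivatives `∂φ_j/∂z_i`. -/
def jacJacobian {l : ℕ} (m : Fin (l + 1) → ℕ) (φ : Fin (l + 1) → ℂ → (Fin l → ℂ) → ℂ)
    (τ : ℂ) (z : Fin l → ℂ) : ℂ :=
  Matrix.det (Matrix.of fun i j : Fin (l + 1) =>
    Fin.cases ((m j : ℂ) * φ j τ z) (fun i' : Fin l => pderiv' i' (φ j) τ z) i)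

/-- `f` is a (holomorphic) modular form of weight `k` on `SL₂(ℤ)`, viewed as a
holomorphic function on the upper half-plane with a Fourier expansion supported
on `n ≥ 0`. -/
def IsModularForm (k : ℤ) (f : ℂ → ℂ) : Prop :=
  DifferentiableOn ℂ f {τ : ℂ | 0 < τ.im} ∧
  (∀ a b c d : ℤ, a * d - b * c = 1 → ∀ τ : ℂ, 0 < τ.im →
    f (((a : ℂ) * τ + (b : ℂ)) / ((c : ℂ) * τ + (d : ℂ))) =
      ((c : ℂ) * τ + (d : ℂ)) ^ k * f τ) ∧
  ∃ cf : ℕ → ℂ, ∀ τ : ℂ, 0 < τ.im →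
    HasSum (fun n : ℕ => cf n * Complex.exp (2 * (Real.pi : ℂ) * Complex.I * (n : ℂ) * τ))
      (f τ)

/-- `φ` is not identically zero on `ℍ × (L ⊗ ℂ)`. -/
def NotIdenticallyZero {l : ℕ} (φ : ℂ → (Fin l → ℂ) → ℂ) : Prop :=
  ∃ τ z, 0 < τ.im ∧ φ τ z ≠ 0

/-- `r` is a primitive lattice vector. -/
def PrimitiveVec {l : ℕ} (r : Fin l → ℤ) : Prop :=
  r ≠ 0 ∧ ∀ (n : ℤ) (s : Fin l → ℤ), r = n • s → IsUnit n

/-- The reflection `σ_r : v ↦ v - ⟨r^∨, v⟩ r` belongs to `G`. -/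
def ReflectionIn {l : ℕ} (M : Matrix (Fin l) (Fin l) ℤ)
    (G : Set (Matrix (Fin l) (Fin l) ℤ)) (r : Fin l → ℤ) : Prop :=
  ∃ S ∈ G, ∀ v : Fin l → ℂ,
    (S.map (Int.cast : ℤ → ℂ)).mulVec v =
      fun i => v i - 2 * pairC M (zc r) v / pairC M (zc r) (zc r) * (r i : ℂ)

/-- `(τ, z)` belongs to `D_r(τ)`, i.e. `⟨r^∨, z⟩ ∈ ℤτ ⊕ ℤ`. -/
def OnMirror {l : ℕ} (M : Matrix (Fin l) (Fin l) ℤ) (r : Fin l → ℤ) (τ : ℂ)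
    (z : Fin l → ℂ) : Prop :=
  ∃ a b : ℤ, 2 * pairC M (zc r) z / pairC M (zc r) (zc r) = (a : ℂ) * τ + (b : ℂ)

/-- `J` vanishes precisely, and with multiplicity one, on the sets `D_r(τ)` for
primitive `r ∈ L` whose reflection lies in `G`. -/
def VanishesOrderOneOnMirrors {l : ℕ} (M : Matrix (Fin l) (Fin l) ℤ)
    (G : Set (Matrix (Fin l) (Fin l) ℤ)) (J : ℂ → (Fin l → ℂ) → ℂ) : Prop :=
  ∀ τ : ℂ, 0 < τ.im → ∀ z : Fin l → ℂ,
    ((J τ z = 0) ↔ ∃ r, PrimitiveVec r ∧ ReflectionIn M G r ∧ OnMirror M r τ z) ∧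
    (∀ r, PrimitiveVec r → ReflectionIn M G r → OnMirror M r τ z →
      (∀ r', PrimitiveVec r' → ReflectionIn M G r' → OnMirror M r' τ z →
        r' = r ∨ r' = -r) →
      deriv (fun w : ℂ => J τ (fun i => z i + w * (r i : ℂ))) 0 ≠ 0)

/-- The Fourier expansion of `φ` has a non-zero coefficient of type `f(0, ℓ)`. -/
def HasNonzeroQZeroTerm {l : ℕ} (M : Matrix (Fin l) (Fin l) ℤ)
    (φ : ℂ → (Fin l → ℂ) → ℂ) : Prop :=
  ∃ c : ℕ → (Fin l → ℚ) → ℂ, FourierRep M φ c ∧ ∃ ℓ, c 0 ℓ ≠ 0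

/-- `ψ = P(φ_1, ..., φ_n)` where `P` is a polynomial with coefficients which are
modular forms on `SL₂(ℤ)`, graded so that each monomial has weight `k` and index `t`. -/
def MPolyRep {l n : ℕ} (kj : Fin n → ℤ) (mj : Fin n → ℕ)
    (φ : Fin n → ℂ → (Fin l → ℂ) → ℂ) (k : ℤ) (t : ℕ)
    (c : (Fin n → ℕ) → ℂ → ℂ) (ψ : ℂ → (Fin l → ℂ) → ℂ) : Prop :=
  {d : Fin n → ℕ | c d ≠ 0}.Finite ∧
  (∀ d : Fin n → ℕ, c d ≠ 0 →
    (∑ j, d j * mj j) = t ∧ IsModularForm (k - ∑ j, (d j : ℤ) * kj j) (c d)) ∧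
  (∀ τ : ℂ, 0 < τ.im → ∀ z : Fin l → ℂ,
    ψ τ z = ∑ᶠ d : Fin n → ℕ, c d τ * ∏ j, (φ j τ z) ^ (d j))

/-- The forms `φ_1, ..., φ_n` are algebraically independent over the graded ring
`M_*(SL₂(ℤ))` of modular forms on `SL₂(ℤ)`. -/
def AlgIndepOverM {l n : ℕ} (φ : Fin n → ℂ → (Fin l → ℂ) → ℂ) : Prop :=
  ∀ c : (Fin n → ℕ) → ℂ → ℂ,
    {d : Fin n → ℕ | c d ≠ 0}.Finite →
    (∀ d, c d ≠ 0 → ∃ w : ℤ, IsModularForm w (c d)) →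
    (∀ τ : ℂ, 0 < τ.im → ∀ z : Fin l → ℂ,
      (∑ᶠ d : Fin n → ℕ, c d τ * ∏ j, (φ j τ z) ^ (d j)) = 0) →
    ∀ d τ, 0 < τ.im → c d τ = 0

/-!
Functions with a Fourier expansion are sums of series of exponentials of linear forms, indexed by
the monoid `ℕ × L*`. They form an algebra closed under differentiation: as `x ↦ ‖c * exp (Λ x)‖` is
convex, such a series is dominated near a point by its values at the vertices of a simplex around
it, so pointwise convergence is already locally uniform. Hence the Jacobian is holomorphic with a
Fourier expansion.

All transformation laws have the form `φ_j(τ', T z) = C_j exp(m_j g(z)) φ_j(τ, z)` with `g`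
independent of `j`. Differentiating the exponential factors only adds multiples of the first row
`(m_j φ_j)_j` to the other rows, and the chain rule for `T` contributes `det T'`.
-/

section ExponentialSeries

open Filter Metric Set Topology

theorem exists_summable_bound_of_convexOn {E ι : Type*} [NormedAddCommGroup E] [NormedSpace ℝ E]
    [FiniteDimensional ℝ E] {F : ι → E → ℝ} {s : Set E} {x : E} (hs : s ∈ 𝓝 x)
    (hconv : ∀ i, ConvexOn ℝ s (F i)) (hpos : ∀ i, ∀ y ∈ s, 0 ≤ F i y)
    (hsum : ∀ y ∈ s, Summable fun i => F i y) :
    ∃ u : ι → ℝ, Summable u ∧ ∀ᶠ y in 𝓝 x, ∀ i, F i y ≤ u i := by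
  obtain ⟨b, hxb, hbs⟩ := exists_mem_interior_convexHull_affineBasis hs
  have hb (k) : b k ∈ s := hbs (subset_convexHull ℝ _ (mem_range_self k))
  refine ⟨fun i => ∑ k, F i (b k), summable_sum fun k _ => hsum _ (hb k), ?_⟩
  filter_upwards [mem_interior_iff_mem_nhds.1 hxb] with y hy i
  obtain ⟨_, ⟨k, rfl⟩, hk⟩ := (hconv i).exists_ge_of_mem_convexHull (range_subset_iff.2 hb) hy
  exact hk.trans (Finset.single_le_sum (f := fun k => F i (b k))
    (fun k _ => hpos i _ (hb k)) (Finset.mem_univ k))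

theorem norm_fderiv_le_of_forall_mem_ball_norm_le {E F : Type*} [NormedAddCommGroup E]
    [NormedSpace ℂ E] [NormedAddCommGroup F] [NormedSpace ℂ F] {f : E → F} {x : E} {r C : ℝ}
    (hr : 0 < r) (hf : DifferentiableOn ℂ f (ball x r)) (hC : ∀ y ∈ ball x r, ‖f y‖ ≤ C) :
    ‖fderiv ℂ f x‖ ≤ 2 * C / r := by
  refine Complex.norm_fderiv_le_div_of_mapsTo_ball hf (fun y hy => ?_) hr
  rw [mem_closedBall, dist_eq_norm, two_mul]
  exact (norm_sub_le _ _).trans (add_le_add (hC y hy) (hC x (mem_ball_self hr)))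

theorem hasFDerivAt_tsum_of_summable_norm {E F ι : Type*} [NormedAddCommGroup E]
    [NormedSpace ℂ E] [NormedAddCommGroup F] [NormedSpace ℂ F] [CompleteSpace F]
    {f : ι → E → F} {u : ι → ℝ} {x : E} (hu : Summable u)
    (hf : ∀ᶠ y in 𝓝 x, ∀ i, DifferentiableAt ℂ (f i) y)
    (hfu : ∀ᶠ y in 𝓝 x, ∀ i, ‖f i y‖ ≤ u i) :
    Summable (fun i => fderiv ℂ (f i) x) ∧
      HasFDerivAt (fun y => ∑' i, f i y) (∑' i, fderiv ℂ (f i) x) x := by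
  obtain ⟨r, hr, hball⟩ := Metric.eventually_nhds_iff_ball.1 (hf.and hfu)
  have hr2 : 0 < r / 2 := half_pos hr
  have hfderiv (i) : ∀ y ∈ ball x (r / 2), ‖fderiv ℂ (f i) y‖ ≤ 2 * u i / (r / 2) := by
    intro y hy
    have hsub : ball y (r / 2) ⊆ ball x r :=
      ball_subset_ball' (by linarith [mem_ball.1 hy])
    exact norm_fderiv_le_of_forall_mem_ball_norm_le hr2
      (fun w hw => ((hball w (hsub hw)).1 i).differentiableWithinAt)
      fun w hw => (hball w (hsub hw)).2 i
  have hu' : Summable fun i => 2 * u i / (r / 2) := (hu.mul_left 2).div_const _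
  have hx : x ∈ ball x (r / 2) := mem_ball_self hr2
  refine ⟨.of_norm_bounded hu' fun i => hfderiv i x hx,
    hasFDerivAt_tsum_of_isPreconnected hu' isOpen_ball (convex_ball x _).isPreconnected
      (fun i y hy => ?_) hfderiv hx (.of_norm_bounded hu fun i => (hball x (mem_ball_self hr)).2 i)
      hx⟩
  exact ((hball y (ball_subset_ball (by linarith) hy)).1 i).hasFDerivAt

theorem convexOn_norm_const_mul_cexp {E : Type*} [NormedAddCommGroup E] [NormedSpace ℂ E]
    (c : ℂ) (Λ : E →L[ℂ] ℂ) : ConvexOn ℝ univ fun x => ‖c * cexp (Λ x)‖ := by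
  have hexp := convexOn_exp.comp_linearMap (Complex.reLm ∘ₗ Λ.toLinearMap.restrictScalars ℝ)
  simpa [Complex.norm_exp, Function.comp_def] using hexp.smul (norm_nonneg c)

variable {A E : Type*} [NormedAddCommGroup E] [NormedSpace ℂ E]

theorem hasFDerivAt_of_hasSum_cexp [FiniteDimensional ℂ E] {Λ : A → E →L[ℂ] ℂ} {c : A → ℂ}
    {f : E → ℂ} {U : Set E} {x : E} (hU : U ∈ 𝓝 x)
    (h : ∀ y ∈ U, HasSum (fun a => c a * cexp (Λ a y)) (f y)) :
    Summable (fun a => (c a * cexp (Λ a x)) • Λ a) ∧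
      HasFDerivAt f (∑' a, (c a * cexp (Λ a x)) • Λ a) x := by
  have : FiniteDimensional ℝ E := .complexToReal E
  obtain ⟨r, hr, hrU⟩ := Metric.mem_nhds_iff.1 hU
  obtain ⟨u, hu, hle⟩ := exists_summable_bound_of_convexOn (ball_mem_nhds x hr)
    (F := fun a y => ‖c a * cexp (Λ a y)‖)
    (fun a => (convexOn_norm_const_mul_cexp (c a) (Λ a)).subset (subset_univ _)
      (convex_ball x r))
    (fun a y _ => norm_nonneg _) (fun y hy => (h y (hrU hy)).summable.norm)
  have hterm (a y) : HasFDerivAt (fun y => c a * cexp (Λ a y)) ((c a * cexp (Λ a y)) • Λ a) y := by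
    simpa [smul_smul] using (Λ a).hasFDerivAt.cexp.const_mul (c a)
  have htsum := hasFDerivAt_tsum_of_summable_norm hu
    (.of_forall fun y a => (hterm a y).differentiableAt) hle
  simp only [(hterm _ _).fderiv] at htsum
  refine ⟨htsum.1, htsum.2.congr_of_eventuallyEq ?_⟩
  filter_upwards [hU] with y hy using (h y hy).tsum_eq.symm

variable [AddCommMonoid A]

theorem hasSum_pi_single_mul_cexp [DecidableEq A] (Λ : A →+ E →L[ℂ] ℂ) (r : ℂ) (x : E) :
    HasSum (fun a => (Pi.single 0 r : A → ℂ) a * cexp (Λ a x)) r := by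
  have h := hasSum_single (f := fun a => (Pi.single 0 r : A → ℂ) a * cexp (Λ a x)) 0
    fun a ha => by simp [ha]
  simpa using h

theorem hasSum_mul_complex {ι κ : Type*} {f : ι → ℂ} {g : κ → ℂ} {s t : ℂ}
    (hf : HasSum f s) (hg : HasSum g t) :
    HasSum (fun p : ι × κ => f p.1 * g p.2) (s * t) :=
  hf.mul hg (summable_mul_of_summable_norm hf.summable.norm hg.summable.norm)

theorem hasSum_mul_cexp_of_hasSum (Λ : A →+ E →L[ℂ] ℂ) {c d : A → ℂ} {x : E} {s t : ℂ}
    (hs : HasSum (fun a => c a * cexp (Λ a x)) s) (ht : HasSum (fun a => d a * cexp (Λ a x)) t) :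
    HasSum (fun a => (∑' p : (fun p : A × A => p.1 + p.2) ⁻¹' {a}, c p.1.1 * d p.1.2) *
      cexp (Λ a x)) (s * t) := by
  have hprod : HasSum (fun p : A × A => c p.1 * cexp (Λ p.1 x) * (d p.2 * cexp (Λ p.2 x)))
      (s * t) :=
    hasSum_mul_complex (f := fun a => c a * cexp (Λ a x))
      (g := fun a => d a * cexp (Λ a x)) hs ht
  refine (hprod.tsum_fiberwise fun p : A × A => p.1 + p.2).congr_fun fun a => ?_
  rw [← tsum_mul_right]
  refine tsum_congr ?_
  rintro ⟨⟨a₁, a₂⟩, rfl : a₁ + a₂ = a⟩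
  simp only [map_add, _root_.add_apply, Complex.exp_add]
  ring

/-- The algebra of functions `E → ℂ` which on `U` are sums of exponential series
`∑ a, c a * exp (Λ a x)`, the exponents being indexed by a monoid `A`. Fourier expansions of Jacobi
forms are the case `A = ℕ × L*`. Nothing is required of the functions outside `U`. -/
def expSeriesSubalgebra (Λ : A →+ E →L[ℂ] ℂ) (U : Set E) : Subalgebra ℂ (E → ℂ) where
  carrier := {f | ∃ c : A → ℂ, ∀ x ∈ U, HasSum (fun a => c a * cexp (Λ a x)) (f x)}
  algebraMap_mem' r := by
    classical
    exact ⟨Pi.single 0 r, fun x _ => hasSum_pi_single_mul_cexp Λ r x⟩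
  add_mem' := by
    rintro f g ⟨c, hc⟩ ⟨d, hd⟩
    exact ⟨c + d, fun x hx => by
      simpa only [Pi.add_apply, add_mul] using (hc x hx).add (hd x hx)⟩
  mul_mem' := by
    rintro f g ⟨c, hc⟩ ⟨d, hd⟩
    exact ⟨_, fun x hx => hasSum_mul_cexp_of_hasSum Λ (hc x hx) (hd x hx)⟩

variable {Λ : A →+ E →L[ℂ] ℂ} {U : Set E} {f g : E → ℂ}

theorem mem_expSeriesSubalgebra_of_eqOn (hf : f ∈ expSeriesSubalgebra Λ U) (hfg : EqOn f g U) :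
    g ∈ expSeriesSubalgebra Λ U := by
  obtain ⟨c, hc⟩ := hf
  exact ⟨c, fun x hx => hfg hx ▸ hc x hx⟩

theorem differentiableOn_of_mem_expSeriesSubalgebra [FiniteDimensional ℂ E] (hU : IsOpen U)
    (hf : f ∈ expSeriesSubalgebra Λ U) : DifferentiableOn ℂ f U := by
  obtain ⟨c, hc⟩ := hf
  exact fun x hx =>
    (hasFDerivAt_of_hasSum_cexp (hU.mem_nhds hx) hc).2.differentiableAt.differentiableWithinAt

theorem fderiv_mem_expSeriesSubalgebra [FiniteDimensional ℂ E] (hU : IsOpen U)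
    (hf : f ∈ expSeriesSubalgebra Λ U) (v : E) :
    (fun x => fderiv ℂ f x v) ∈ expSeriesSubalgebra Λ U := by
  obtain ⟨c, hc⟩ := hf
  refine ⟨fun a => c a * Λ a v, fun x hx => ?_⟩
  obtain ⟨hsum, hderiv⟩ := hasFDerivAt_of_hasSum_cexp (hU.mem_nhds hx) hc
  have happly := hsum.hasSum.mapL (ContinuousLinearMap.apply ℂ ℂ v)
  simp only [hderiv.fderiv]
  refine happly.congr_fun fun a => ?_
  simp only [ContinuousLinearMap.apply_apply, _root_.smul_apply, smul_eq_mul]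
  ring

end ExponentialSeries

theorem det_mem_of_forall_mem {n R S : Type*} [Fintype n] [DecidableEq n] [CommRing R]
    [SetLike S R] [SubringClass S R] {s : S} {N : Matrix n n R} (h : ∀ i j, N i j ∈ s) :
    N.det ∈ s := by
  rw [Matrix.det_apply']
  exact sum_mem fun σ _ => mul_mem (intCast_mem s _) (prod_mem fun i _ => h _ _)

section BorderedJacobian

variable {𝕜 : Type*} [NontriviallyNormedField 𝕜] {l : ℕ}

/-- The matrix with first row `m j * f j z` and later rows the partial derivatives of the `f j`
at `z`; its determinant is the Jacobian of Jacobi forms of indices `m j`. -/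
def borderedJacobian (m : Fin (l + 1) → 𝕜) (f : Fin (l + 1) → (Fin l → 𝕜) → 𝕜) (z : Fin l → 𝕜) :
    Matrix (Fin (l + 1)) (Fin (l + 1)) 𝕜 :=
  Matrix.of (Fin.cons (fun j => m j * f j z) fun i j => fderiv 𝕜 (f j) z (Pi.single i 1))

theorem det_cons_single_cons_zero {R : Type*} [CommRing R] (B : Matrix (Fin l) (Fin l) R) :
    (Matrix.of (Fin.cons (Pi.single 0 1) fun i => Fin.cons 0 (B i)) :
      Matrix (Fin (l + 1)) (Fin (l + 1)) R).det = B.det := by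
  rw [Matrix.det_succ_row_zero, Fin.sum_univ_succ]
  simp only [Matrix.of_apply, Fin.cons_zero, Pi.single_eq_same, Fin.val_zero, pow_zero, one_mul,
    ne_eq, Fin.succ_ne_zero, not_false_eq_true, Pi.single_eq_of_ne, mul_zero, zero_mul,
    Finset.sum_const_zero, add_zero]
  rfl

/-- A factor whose logarithmic derivative is `m j • g'` adds to each derivative row a multiple of
the first row. -/
theorem det_borderedJacobian_mul {m : Fin (l + 1) → 𝕜} {f u : Fin (l + 1) → (Fin l → 𝕜) → 𝕜}
    {z : Fin l → 𝕜} {g' : (Fin l → 𝕜) →L[𝕜] 𝕜} (hf : ∀ j, DifferentiableAt 𝕜 (f j) z)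
    (hu : ∀ j, HasFDerivAt (u j) ((m j * u j z) • g') z) :
    (borderedJacobian m (fun j w => u j w * f j w) z).det =
      (∏ j, u j z) * (borderedJacobian m f z).det := by
  rw [← Matrix.det_mul_row]
  refine Matrix.det_eq_of_forall_row_eq_smul_add_const
    (Fin.cons 0 fun i => g' (Pi.single i 1)) 0 rfl fun i j => ?_
  have hmul : fderiv 𝕜 (fun w => u j w * f j w) z =
      u j z • fderiv 𝕜 (f j) z + f j z • (m j * u j z) • g' :=
    ((hu j).mul (hf j).hasFDerivAt).fderiv
  cases i using Fin.cases with
  | zero => simp [borderedJacobian, mul_left_comm]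
  | succ i =>
    simp only [borderedJacobian, of_apply, Fin.cons_succ, hmul, _root_.add_apply,
      _root_.smul_apply, smul_eq_mul, Fin.cons_zero, add_right_inj]
    ring

theorem det_borderedJacobian_comp {m : Fin (l + 1) → 𝕜} {f : Fin (l + 1) → (Fin l → 𝕜) → 𝕜}
    {T : (Fin l → 𝕜) → Fin l → 𝕜} {T' : (Fin l → 𝕜) →L[𝕜] Fin l → 𝕜} {z : Fin l → 𝕜}
    (hf : ∀ j, DifferentiableAt 𝕜 (f j) (T z)) (hT : HasFDerivAt T T' z) :
    (borderedJacobian m (fun j w => f j (T w)) z).det =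
      T'.det * (borderedJacobian m f (T z)).det := by
  have hchain (j i) : fderiv 𝕜 (fun w => f j (T w)) z (Pi.single i 1) =
      ∑ k, T' (Pi.single i 1) k * fderiv 𝕜 (f j) (T z) (Pi.single k 1) := by
    have hcomp : HasFDerivAt (fun w => f j (T w)) ((fderiv 𝕜 (f j) (T z)).comp T') z :=
      (hf j).hasFDerivAt.comp z hT
    rw [hcomp.fderiv, ContinuousLinearMap.comp_apply]
    conv_lhs => rw [pi_eq_sum_univ' (T' (Pi.single i 1))]
    simp
  rw [ContinuousLinearMap.det, ← LinearMap.det_toMatrix',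
    ← Matrix.det_transpose (LinearMap.toMatrix' _),
    ← det_cons_single_cons_zero (LinearMap.toMatrix' _)ᵀ, ← Matrix.det_mul]
  congr 1
  ext i j
  rw [Matrix.mul_apply, Fin.sum_univ_succ]
  cases i using Fin.cases with
  | zero => simp [borderedJacobian]
  | succ i => simp [borderedJacobian, hchain, LinearMap.toMatrix'_apply]

end BorderedJacobian

section Transformation

variable {l : ℕ} {m : Fin (l + 1) → ℕ} {φ : Fin (l + 1) → ℂ → (Fin l → ℂ) → ℂ} {τ τ' : ℂ}
  {z : Fin l → ℂ}

theorem pderiv'_eq_fderiv {ψ : ℂ → (Fin l → ℂ) → ℂ} (h : DifferentiableAt ℂ (ψ τ) z) (i : Fin l) :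
    pderiv' i ψ τ z = fderiv ℂ (ψ τ) z (Pi.single i 1) := by
  have hψ : HasFDerivAt (ψ τ) (fderiv ℂ (ψ τ) z) (Function.update z i (z i)) := by
    simpa using h.hasFDerivAt
  exact (hψ.comp_hasDerivAt (z i) (hasDerivAt_update z i (z i))).deriv

theorem jacJacobian_eq_det_borderedJacobian (h : ∀ j, DifferentiableAt ℂ (φ j τ) z) :
    jacJacobian m φ τ z = (borderedJacobian (fun j => (m j : ℂ)) (fun j => φ j τ) z).det := by
  unfold jacJacobian borderedJacobian
  congr 2
  ext i j
  cases i using Fin.cases with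
  | zero => rfl
  | succ i => exact pderiv'_eq_fderiv (h j) i

theorem det_mul_jacJacobian {T : (Fin l → ℂ) → Fin l → ℂ} {T' : (Fin l → ℂ) →L[ℂ] Fin l → ℂ}
    {C : Fin (l + 1) → ℂ} {g : (Fin l → ℂ) → ℂ} (hφ : ∀ j, DifferentiableAt ℂ (φ j τ) z)
    (hφ' : ∀ j, DifferentiableAt ℂ (φ j τ') (T z)) (hT : HasFDerivAt T T' z)
    (hg : DifferentiableAt ℂ g z)
    (h : ∀ j w, φ j τ' (T w) = C j * cexp (m j * g w) * φ j τ w) :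
    T'.det * jacJacobian m φ τ' (T z) =
      (∏ j, C j) * cexp ((∑ j, m j : ℕ) * g z) * jacJacobian m φ τ z := by
  have hfactor (j) : HasFDerivAt (fun w => C j * cexp (m j * g w))
      ((m j * (C j * cexp (m j * g z))) • fderiv ℂ g z) z := by
    refine ((hg.hasFDerivAt.const_mul (m j : ℂ)).cexp.const_mul (C j)).congr_fderiv ?_
    rw [smul_smul, smul_smul]
    congr 1
    ring
  calc T'.det * jacJacobian m φ τ' (T z)
      = (borderedJacobian (fun j => (m j : ℂ)) (fun j w => φ j τ' (T w)) z).det := by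
        rw [jacJacobian_eq_det_borderedJacobian hφ', det_borderedJacobian_comp hφ' hT]
    _ = (∏ j, C j * cexp (m j * g z)) * jacJacobian m φ τ z := by
        simp only [h]
        rw [jacJacobian_eq_det_borderedJacobian hφ, det_borderedJacobian_mul hφ hfactor]
    _ = (∏ j, C j) * cexp ((∑ j, m j : ℕ) * g z) * jacJacobian m φ τ z := by
        rw [Finset.prod_mul_distrib, ← Complex.exp_sum, ← Finset.sum_mul, Nat.cast_sum]

theorem prod_zpow_eq_zpow_sum {ι K : Type*} [CommGroupWithZero K] {w : K} (hw : w ≠ 0)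
    (s : Finset ι) (k : ι → ℤ) : ∏ i ∈ s, w ^ k i = w ^ ∑ i ∈ s, k i := by
  classical
  induction s using Finset.induction_on with
  | empty => simp
  | insert i s hi ih => rw [Finset.prod_insert hi, Finset.sum_insert hi, zpow_add₀ hw, ih]

theorem moebius_denom_ne_zero {a b c d : ℤ} (h : a * d - b * c = 1) (hτ : 0 < τ.im) :
    (c : ℂ) * τ + d ≠ 0 := by
  have hcd : ![(c : ℝ), d] ≠ 0 := by
    intro hzero
    have hc : c = 0 := by simpa using congrFun hzero 0
    have hd : d = 0 := by simpa using congrFun hzero 1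
    simp [hc, hd] at h
  simpa using UpperHalfPlane.linear_ne_zero_of_im hτ.ne' hcd

theorem moebius_im_pos {a b c d : ℤ} (h : a * d - b * c = 1) (hτ : 0 < τ.im) :
    0 < (((a : ℂ) * τ + b) / ((c : ℂ) * τ + d)).im := by
  let γ : Matrix.SpecialLinearGroup (Fin 2) ℤ :=
    ⟨!![a, b; c, d], by rw [Matrix.det_fin_two_of, h]⟩
  have him := (γ • (⟨τ, hτ⟩ : UpperHalfPlane)).im_pos
  rw [UpperHalfPlane.im, UpperHalfPlane.coe_specialLinearGroup_apply] at him
  simpa [γ] using him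

variable {M : Matrix (Fin l) (Fin l) ℤ}

theorem differentiable_pairC_self : Differentiable ℂ fun w : Fin l → ℂ => pairC M w w := by
  unfold pairC
  fun_prop

theorem differentiable_pairC_right (v : Fin l → ℂ) : Differentiable ℂ (pairC M v) := by
  unfold pairC
  fun_prop

theorem isOpen_upperHalfPlane_prod_univ {F : Type*} [TopologicalSpace F] :
    IsOpen ({τ : ℂ | 0 < τ.im} ×ˢ (Set.univ : Set F)) :=
  (isOpen_lt continuous_const Complex.continuous_im).prod isOpen_univ

theorem IsWeakJacobiForm.differentiable {k : ℤ} {t : ℕ} {ψ : ℂ → (Fin l → ℂ) → ℂ}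
    (h : IsWeakJacobiForm M k t ψ) (hτ : 0 < τ.im) : Differentiable ℂ (ψ τ) := by
  intro z
  have hψ : DifferentiableAt ℂ (fun p : ℂ × (Fin l → ℂ) => ψ p.1 p.2) (τ, z) :=
    h.1.differentiableAt (isOpen_upperHalfPlane_prod_univ.mem_nhds ⟨hτ, trivial⟩)
  exact hψ.comp z ((differentiableAt_const τ).prodMk differentiableAt_id)

variable {k : Fin (l + 1) → ℤ}

theorem jacJacobian_moebius (hφ : ∀ j, IsWeakJacobiForm M (k j) (m j) (φ j)) {a b c d : ℤ}
    (h : a * d - b * c = 1) (hτ : 0 < τ.im) (z : Fin l → ℂ) :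
    jacJacobian m φ ((a * τ + b) / (c * τ + d)) (fun i => z i / (c * τ + d)) =
      (c * τ + d) ^ (l + ∑ j, k j) *
        cexp ((∑ j, m j : ℕ) * Real.pi * I * c * pairC M z z / (c * τ + d)) *
        jacJacobian m φ τ z := by
  have hw := moebius_denom_ne_zero h hτ
  set T : (Fin l → ℂ) →L[ℂ] Fin l → ℂ := (c * τ + d : ℂ)⁻¹ • ContinuousLinearMap.id ℂ _
  have hT (v) : T v = fun i => v i / (c * τ + d) := by
    ext i
    simp [T, div_eq_inv_mul]
  have hdet : T.det = ((c * τ + d : ℂ) ^ l)⁻¹ := by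
    simp [T, ContinuousLinearMap.det, LinearMap.det_smul]
  have hg : DifferentiableAt ℂ (fun v => Real.pi * I * c / (c * τ + d) * pairC M v v) z :=
    (differentiable_pairC_self z).const_mul _
  have hJ := det_mul_jacJacobian (m := m) (fun j => (hφ j).differentiable hτ z)
    (fun j => (hφ j).differentiable (moebius_im_pos h hτ) _) T.hasFDerivAt hg
    (C := fun j => (c * τ + d) ^ k j) fun j v => by
      rw [hT, (hφ j).2.1 a b c d h τ hτ v]
      congr 3
      ring
  rw [hT, hdet, inv_mul_eq_iff_eq_mul₀ (pow_ne_zero l hw), prod_zpow_eq_zpow_sum hw] at hJ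
  rw [hJ, zpow_add₀ hw, zpow_natCast, ← mul_assoc, ← mul_assoc]
  congr 3
  ring

theorem jacJacobian_add_lattice (hφ : ∀ j, IsWeakJacobiForm M (k j) (m j) (φ j)) (hτ : 0 < τ.im)
    (x y : Fin l → ℤ) (z : Fin l → ℂ) :
    jacJacobian m φ τ (fun i => z i + x i * τ + y i) =
      cexp (-(∑ j, m j : ℕ) * Real.pi * I *
        (pairC M (zc x) (zc x) * τ + 2 * pairC M (zc x) z)) * jacJacobian m φ τ z := by
  have hT : HasFDerivAt (fun (v : Fin l → ℂ) i => v i + x i * τ + y i)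
      (ContinuousLinearMap.id ℂ _) z := by
    simp only [add_assoc]
    exact (hasFDerivAt_id z).add_const _
  have hg : DifferentiableAt ℂ (fun v => -(Real.pi * I) *
      (pairC M (zc x) (zc x) * τ + 2 * pairC M (zc x) v)) z :=
    (((differentiable_pairC_right _ z).const_mul 2).const_add _).const_mul _
  have hJ := det_mul_jacJacobian (m := m) (fun j => (hφ j).differentiable hτ z)
    (fun j => (hφ j).differentiable hτ _) hT hg (C := 1) fun j v => by
      rw [(hφ j).2.2.1 x y τ hτ v, Pi.one_apply, one_mul]
      congr 2
      ring
  rw [ContinuousLinearMap.det, ContinuousLinearMap.coe_id, LinearMap.det_id, one_mul] at hJ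
  simp only [hJ, Pi.one_apply, Finset.prod_const_one, one_mul]
  congr 2
  ring

theorem jacJacobian_mulVec (hφ : ∀ j, Differentiable ℂ (φ j τ))
    {σ : Matrix (Fin l) (Fin l) ℤ} (hσ : IsUnit σ.det)
    (hinv : ∀ j v, φ j τ ((σ.map (Int.cast : ℤ → ℂ)).mulVec v) = φ j τ v) (z : Fin l → ℂ) :
    jacJacobian m φ τ ((σ.map (Int.cast : ℤ → ℂ)).mulVec z) = σ.det * jacJacobian m φ τ z := by
  set T : (Fin l → ℂ) →L[ℂ] Fin l → ℂ :=
    (Matrix.toLin' (σ.map (Int.cast : ℤ → ℂ))).toContinuousLinearMap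
  have hdet : T.det = σ.det := by
    simp [T, ContinuousLinearMap.det, Int.cast_det]
  have hdet_sq : (σ.det : ℂ) * σ.det = 1 := mod_cast Int.isUnit_mul_self hσ
  have hJ : T.det * jacJacobian m φ τ (T z) = jacJacobian m φ τ z := by
    simpa using det_mul_jacJacobian (m := m) (C := 1) (g := 0) (fun j => hφ j z)
      (fun j => hφ j _) T.hasFDerivAt (differentiableAt_const 0) fun j v => by
        simpa using! hinv j v
  rw [← hJ, hdet, ← mul_assoc, hdet_sq, one_mul]
  rfl

theorem IsOrthSubgroup.isUnit_det {G : Set (Matrix (Fin l) (Fin l) ℤ)} (hG : IsOrthSubgroup M G)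
    {σ : Matrix (Fin l) (Fin l) ℤ} (hσ : σ ∈ G) : IsUnit σ.det := by
  obtain ⟨σ', -, hmul, -⟩ := hG.inv_mem σ hσ
  exact Matrix.isUnit_det_of_right_inverse hmul

end Transformation

section Fourier

variable {l : ℕ} {M : Matrix (Fin l) (Fin l) ℤ}

theorem pairC_eq_toLinearMap₂' (v w : Fin l → ℂ) :
    pairC M v w = Matrix.toLinearMap₂' ℂ (M.map (Int.cast : ℤ → ℂ)) v w := by
  simp only [pairC, Matrix.toLinearMap₂'_apply, Matrix.map_apply, smul_eq_mul,
    mul_left_comm, mul_comm]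

/-- The dual lattice `L*`, as a submonoid of `ℚ^l`. -/
def dualLattice (M : Matrix (Fin l) (Fin l) ℤ) : AddSubmonoid (Fin l → ℚ) where
  carrier := {ℓ | InDual M ℓ}
  zero_mem' x := ⟨0, by simp [pairQ]⟩
  add_mem' {ℓ₁ ℓ₂} h₁ h₂ x := by
    obtain ⟨a, ha⟩ := h₁ x
    obtain ⟨b, hb⟩ := h₂ x
    refine ⟨a + b, ?_⟩
    rw [Int.cast_add, ← ha, ← hb]
    simp only [pairQ, Pi.add_apply, add_mul, Finset.sum_add_distrib]

/-- The linear form `(τ, z) ↦ 2πi (n τ + ⟨ℓ, z⟩)` in the exponent of the Fourier expansion of a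
Jacobi form. -/
def jacobiExponent (M : Matrix (Fin l) (Fin l) ℤ) :
    ℕ × dualLattice M →+ (ℂ × (Fin l → ℂ)) →L[ℂ] ℂ where
  toFun p := (2 * Real.pi * I : ℂ) • ((p.1 : ℂ) • ContinuousLinearMap.fst ℂ ℂ (Fin l → ℂ) +
    (Matrix.toLinearMap₂' ℂ (M.map (Int.cast : ℤ → ℂ)) (qc p.2)).toContinuousLinearMap.comp
      (ContinuousLinearMap.snd ℂ ℂ (Fin l → ℂ)))
  map_zero' := by
    have hqc : qc (0 : Fin l → ℚ) = 0 := by ext; simp [qc]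
    refine ContinuousLinearMap.ext fun x => ?_
    simp [hqc]
  map_add' p q := by
    have hqc : qc (p.2 + q.2 : Fin l → ℚ) = qc p.2 + qc q.2 := by ext; simp [qc]
    refine ContinuousLinearMap.ext fun x => ?_
    simp only [Prod.fst_add, Nat.cast_add, Prod.snd_add, AddSubmonoid.coe_add, hqc, map_add,
      ContinuousLinearMap.add_comp, smul_add, _root_.add_apply, _root_.smul_apply,
      ContinuousLinearMap.coe_fst', smul_eq_mul, ContinuousLinearMap.comp_apply,
      ContinuousLinearMap.coe_snd', LinearMap.coe_toContinuousLinearMap']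
    ring

theorem jacobiExponent_apply (p : ℕ × dualLattice M) (x : ℂ × (Fin l → ℂ)) :
    jacobiExponent M p x = 2 * Real.pi * I * (p.1 * x.1 + pairC M (qc p.2) x.2) := by
  simp [jacobiExponent, pairC_eq_toLinearMap₂', mul_add]

/-- The algebra of functions on `ℂ × (L ⊗ ℂ)` having a Fourier expansion on `ℍ × (L ⊗ ℂ)`. -/
abbrev jacobiFourierSubalgebra (M : Matrix (Fin l) (Fin l) ℤ) :
    Subalgebra ℂ (ℂ × (Fin l → ℂ) → ℂ) :=
  expSeriesSubalgebra (jacobiExponent M) ({τ : ℂ | 0 < τ.im} ×ˢ Set.univ)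

theorem exists_fourierRep_iff {φ : ℂ → (Fin l → ℂ) → ℂ} :
    (∃ c, FourierRep M φ c) ↔ (fun p => φ p.1 p.2) ∈ jacobiFourierSubalgebra M := by
  have hinj : Function.Injective
      (Prod.map id Subtype.val : ℕ × dualLattice M → ℕ × (Fin l → ℚ)) :=
    Function.injective_id.prodMap Subtype.val_injective
  constructor
  · rintro ⟨c, hdual, hsum⟩
    refine ⟨fun p => c p.1 p.2, fun ⟨τ, z⟩ hτ => ?_⟩
    simp only [jacobiExponent_apply]
    refine (hinj.hasSum_iff fun p hp => ?_).2 (hsum τ hτ.1 z)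
    have hc : c p.1 p.2 = 0 := by
      by_contra hc
      exact hp ⟨(p.1, ⟨p.2, hdual _ _ hc⟩), rfl⟩
    rw [hc, zero_mul]
  · rintro ⟨c, hc⟩
    classical
    refine ⟨fun n ℓ => if h : InDual M ℓ then c (n, ⟨ℓ, h⟩) else 0, fun n ℓ hne => ?_,
      fun τ hτ z => ?_⟩
    · by_contra h
      exact hne (dif_neg h)
    · refine (hinj.hasSum_iff fun p hp => ?_).1 ?_
      · have hp : ¬ InDual M p.2 := fun h => hp ⟨(p.1, ⟨p.2, h⟩), rfl⟩
        simp [hp]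
      · refine (hc (τ, z) ⟨hτ, trivial⟩).congr_fun ?_
        rintro ⟨n, ℓ, hℓ⟩
        simp [jacobiExponent_apply, show InDual M ℓ from hℓ]

theorem jacJacobian_mem_jacobiFourierSubalgebra (m : Fin (l + 1) → ℕ)
    {φ : Fin (l + 1) → ℂ → (Fin l → ℂ) → ℂ}
    (hφ : ∀ j, (fun p : ℂ × (Fin l → ℂ) => φ j p.1 p.2) ∈ jacobiFourierSubalgebra M) :
    (fun p : ℂ × (Fin l → ℂ) => jacJacobian m φ p.1 p.2) ∈ jacobiFourierSubalgebra M := by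
  let F (j) : ℂ × (Fin l → ℂ) → ℂ := fun p => φ j p.1 p.2
  let N : Matrix (Fin (l + 1)) (Fin (l + 1)) (ℂ × (Fin l → ℂ) → ℂ) :=
    Matrix.of (Fin.cons (fun j => (m j : ℂ) • F j)
      fun i j p => fderiv ℂ (F j) p (0, Pi.single i 1))
  have hN : N.det ∈ jacobiFourierSubalgebra M := by
    refine det_mem_of_forall_mem (s := (jacobiFourierSubalgebra M).toSubring) fun i j => ?_
    cases i using Fin.cases with
    | zero => exact Subalgebra.smul_mem _ (hφ j) _
    | succ i => exact fderiv_mem_expSeriesSubalgebra isOpen_upperHalfPlane_prod_univ (hφ j) _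
  refine mem_expSeriesSubalgebra_of_eqOn hN fun p hp => ?_
  have hF (j) : HasFDerivAt (φ j p.1) ((fderiv ℂ (F j) p).comp (.inr ℂ ℂ _)) p.2 := by
    have hd : DifferentiableAt ℂ (F j) p :=
      (differentiableOn_of_mem_expSeriesSubalgebra isOpen_upperHalfPlane_prod_univ
        (hφ j)).differentiableAt (isOpen_upperHalfPlane_prod_univ.mem_nhds hp)
    have hslice : HasFDerivAt (fun z => (p.1, z)) (.inr ℂ ℂ (Fin l → ℂ)) p.2 :=
      hasFDerivAt_prodMk_right p.1 p.2
    exact hd.hasFDerivAt.comp p.2 hslice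
  change Pi.evalRingHom (fun _ => ℂ) p N.det = _
  rw [jacJacobian_eq_det_borderedJacobian fun j => (hF j).differentiableAt, RingHom.map_det]
  congr 1
  ext i j
  cases i using Fin.cases with
  | zero => simp [N, F, borderedJacobian]
  | succ i => simp [N, borderedJacobian, (hF j).fderiv]

end Fourier

theorem jacobian_is_weak_jacobi_form_general {l : ℕ} (M : Matrix (Fin l) (Fin l) ℤ)
    (G : Set (Matrix (Fin l) (Fin l) ℤ)) (hdet : ∀ σ ∈ G, IsUnit σ.det)
    (kj : Fin (l + 1) → ℤ) (mj : Fin (l + 1) → ℕ) (φ : Fin (l + 1) → ℂ → (Fin l → ℂ) → ℂ)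
    (hφ : ∀ j, IsWeakJacobiForm M (kj j) (mj j) (φ j)) (hφG : ∀ j, GInvariant G (φ j)) :
    IsWeakJacobiForm M ((l : ℤ) + ∑ j, kj j) (∑ j, mj j) (jacJacobian mj φ) ∧
    ∀ σ ∈ G, ∀ τ : ℂ, 0 < τ.im → ∀ z : Fin l → ℂ,
      jacJacobian mj φ τ ((σ.map (Int.cast : ℤ → ℂ)).mulVec z) =
        (σ.det : ℂ) * jacJacobian mj φ τ z := by
  have hJ : (fun p : ℂ × (Fin l → ℂ) => jacJacobian mj φ p.1 p.2) ∈ jacobiFourierSubalgebra M :=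
    jacJacobian_mem_jacobiFourierSubalgebra mj fun j => exists_fourierRep_iff.1 (hφ j).2.2.2
  refine ⟨⟨differentiableOn_of_mem_expSeriesSubalgebra isOpen_upperHalfPlane_prod_univ hJ,
    fun a b c d h τ hτ z => jacJacobian_moebius hφ h hτ z,
    fun x y τ hτ z => jacJacobian_add_lattice hφ hτ x y z, exists_fourierRep_iff.2 hJ⟩, ?_⟩
  exact fun σ hσ τ hτ z => jacJacobian_mulVec (fun j => (hφ j).differentiable hτ) (hdet σ hσ)
    (fun j => hφG j σ hσ τ hτ) z

/-- The Jacobian `J(φ_1,…,φ_{l+1})` of `l+1` `G`-invariant weak Jacobi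
forms of weights `k_j` and indices `m_j` is a weak Jacobi form of weight `l + ∑ k_j` and
index `∑ m_j` associated to `L`, and `J(τ, σ(𝔷)) = det(σ) · J(τ, 𝔷)` for every `σ ∈ G`. -/
theorem jacobian_is_weak_jacobi_form {l : ℕ}
    (M : Matrix (Fin l) (Fin l) ℤ) (hM : IsEvenPosDef M)
    (G : Set (Matrix (Fin l) (Fin l) ℤ)) (hG : IsOrthSubgroup M G)
    (kj : Fin (l + 1) → ℤ) (mj : Fin (l + 1) → ℕ)
    (φ : Fin (l + 1) → ℂ → (Fin l → ℂ) → ℂ)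
    (hφ : ∀ j, IsWeakJacobiForm M (kj j) (mj j) (φ j))
    (hφG : ∀ j, GInvariant G (φ j)) :
    IsWeakJacobiForm M ((l : ℤ) + ∑ j, kj j) (∑ j, mj j) (jacJacobian mj φ) ∧
    ∀ σ ∈ G, ∀ τ : ℂ, 0 < τ.im → ∀ z : Fin l → ℂ,
      jacJacobian mj φ τ ((σ.map (Int.cast : ℤ → ℂ)).mulVec z) =
        (σ.det : ℂ) * jacJacobian mj φ τ z :=
  jacobian_is_weak_jacobi_form_general M G (fun _ hσ => hG.isUnit_det hσ) kj mj φ hφ hφG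

end
end

section
/- Let R be an irreducible root system. The weak Jacobi form Φ_R has a non-zero Fourier coefficient of type f(0,ℓ); that is, the q⁰-term of the Fourier expansion of Φ_R is not identically zero. -/
open Complex Matrix

noncomputable section

/-- The standard bilinear form (dot product) on `ℝ^l`. -/
def dotR {l : ℕ} (v w : Fin l → ℝ) : ℝ := ∑ i, v i * w i

/-- The standard bilinear form extended to `ℂ^l`. -/
def dotCC {l : ℕ} (v w : Fin l → ℂ) : ℂ := ∑ i, v i * w i

/-- A real vector viewed as a complex vector. -/
def rc {l : ℕ} (x : Fin l → ℝ) : Fin l → ℂ := fun i => (x i : ℂ)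

/-- An irreducible (crystallographic, reduced) root system of rank `l`, realized in `ℝ^l`
with the standard bilinear form, whose roots span an integral lattice. -/
structure IrreducibleRootSystem (l : ℕ) where
  roots : Finset (Fin l → ℝ)
  nonempty : roots.Nonempty
  zero_not_mem : (0 : Fin l → ℝ) ∉ roots
  spans : Submodule.span ℝ (roots : Set (Fin l → ℝ)) = ⊤
  reduced : ∀ r ∈ roots, ∀ c : ℝ, c • r ∈ roots → c = 1 ∨ c = -1
  crystal : ∀ r ∈ roots, ∀ s ∈ roots, ∃ n : ℤ, 2 * dotR r s = (n : ℝ) * dotR r r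
  reflect : ∀ r ∈ roots, ∀ s ∈ roots, s - (2 * dotR r s / dotR r r) • r ∈ roots
  integral : ∀ r ∈ roots, ∀ s ∈ roots, ∃ n : ℤ, dotR r s = (n : ℝ)
  irreducible : ∀ S : Finset (Fin l → ℝ), S ⊆ roots →
    (∀ r ∈ S, ∀ s ∈ roots, s ∉ S → dotR r s = 0) → S = ∅ ∨ S = roots

/-- The coroot `r^∨ = 2r/(r,r)` of `r`. -/
def coroot {l : ℕ} (r : Fin l → ℝ) : Fin l → ℝ := (2 / dotR r r) • r

/-- The lattice spanned by the roots of `R` is even. -/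
def RootLatticeEven {l : ℕ} (R : IrreducibleRootSystem l) : Prop :=
  ∀ r ∈ R.roots, ∃ n : ℤ, dotR r r = 2 * (n : ℝ)

/-- `ε` is the rescaling factor of the bilinear form of the root lattice: `1` if it is
already even and `2` if it is odd; `L_R` is the root lattice with form `ε·(·,·)`. -/
def EpsFor {l : ℕ} (R : IrreducibleRootSystem l) (ε : ℕ) : Prop :=
  (RootLatticeEven R → ε = 1) ∧ (¬ RootLatticeEven R → ε = 2)

/-- The root lattice `Q(R)` spanned by the roots. -/
def rootLattice {l : ℕ} (R : IrreducibleRootSystem l) : AddSubgroup (Fin l → ℝ) :=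
  AddSubgroup.closure (R.roots : Set (Fin l → ℝ))

/-- `ℓ` belongs to the dual lattice `L_R^*`. -/
def InDualR {l : ℕ} (R : IrreducibleRootSystem l) (ε : ℕ) (ℓ : Fin l → ℝ) : Prop :=
  ∀ r ∈ R.roots, ∃ n : ℤ, (ε : ℝ) * dotR ℓ r = (n : ℝ)

/-- A Fourier-series representation of `φ` supported on `n ≥ 0` and `ℓ ∈ L_R^*`. -/
def FourierRepR {l : ℕ} (R : IrreducibleRootSystem l) (ε : ℕ)
    (φ : ℂ → (Fin l → ℂ) → ℂ) (c : ℕ → (Fin l → ℝ) → ℂ) : Prop :=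
  (∀ n ℓ, c n ℓ ≠ 0 → InDualR R ε ℓ) ∧
  ∀ τ : ℂ, 0 < τ.im → ∀ z : Fin l → ℂ,
    HasSum (fun p : ℕ × (Fin l → ℝ) =>
      c p.1 p.2 * Complex.exp (2 * (Real.pi : ℂ) * Complex.I *
        ((p.1 : ℂ) * τ + (ε : ℂ) * dotCC (rc p.2) z))) (φ τ z)

/-- `φ` is a weak Jacobi form of weight `k` and index `t` associated to the even
positive definite lattice `L_R` attached to the root system `R`. -/
def IsWeakJacobiFormR {l : ℕ} (R : IrreducibleRootSystem l) (ε : ℕ) (k : ℤ) (t : ℕ)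
    (φ : ℂ → (Fin l → ℂ) → ℂ) : Prop :=
  (DifferentiableOn ℂ (fun p : ℂ × (Fin l → ℂ) => φ p.1 p.2)
    ({τ : ℂ | 0 < τ.im} ×ˢ (Set.univ : Set (Fin l → ℂ)))) ∧
  (∀ a b c d : ℤ, a * d - b * c = 1 → ∀ τ : ℂ, 0 < τ.im → ∀ z : Fin l → ℂ,
    φ (((a : ℂ) * τ + (b : ℂ)) / ((c : ℂ) * τ + (d : ℂ)))
        (fun i => z i / ((c : ℂ) * τ + (d : ℂ))) =
      ((c : ℂ) * τ + (d : ℂ)) ^ k *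
        Complex.exp ((t : ℂ) * (Real.pi : ℂ) * Complex.I * (c : ℂ) *
          ((ε : ℂ) * dotCC z z) / ((c : ℂ) * τ + (d : ℂ))) * φ τ z) ∧
  (∀ x y : Fin l → ℝ, x ∈ rootLattice R → y ∈ rootLattice R →
    ∀ τ : ℂ, 0 < τ.im → ∀ z : Fin l → ℂ,
    φ τ (fun i => z i + (x i : ℂ) * τ + (y i : ℂ)) =
      Complex.exp (-(t : ℂ) * (Real.pi : ℂ) * Complex.I *
        ((ε : ℂ) * dotCC (rc x) (rc x) * τ + 2 * (ε : ℂ) * dotCC (rc x) z)) * φ τ z) ∧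
  (∃ c : ℕ → (Fin l → ℝ) → ℂ, FourierRepR R ε φ c)

/-- The linear form `v ↦ (r, v)`. -/
def dotLin {l : ℕ} (r : Fin l → ℝ) : (Fin l → ℝ) →ₗ[ℝ] ℝ where
  toFun v := dotR r v
  map_add' u v := by
    simp only [dotR, Pi.add_apply, mul_add, Finset.sum_add_distrib]
  map_smul' c v := by
    simp only [dotR, Pi.smul_apply, smul_eq_mul, RingHom.id_apply, Finset.mul_sum]
    exact Finset.sum_congr rfl fun i _ => by ring

/-- The linear form `v ↦ ⟨r^∨, v⟩ = 2(r,v)/(r,r)`. -/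
def corootForm {l : ℕ} (r : Fin l → ℝ) : (Fin l → ℝ) →ₗ[ℝ] ℝ :=
  (2 / dotR r r) • dotLin r

/-- The Weyl group `W(R)`: the group of linear automorphisms of `ℝ^l` generated by the
reflections in the roots of `R`. -/
def weylGroup {l : ℕ} (R : IrreducibleRootSystem l) :
    Subgroup ((Fin l → ℝ) ≃ₗ[ℝ] (Fin l → ℝ)) :=
  Subgroup.closure
    {w | ∃ r ∈ R.roots, ∃ h : corootForm r r = 2, w = Module.reflection h}

/-- The action of a real linear automorphism on the complexification `ℂ^l`. -/
def actW {l : ℕ} (w : (Fin l → ℝ) ≃ₗ[ℝ] (Fin l → ℝ)) (z : Fin l → ℂ) : Fin l → ℂ :=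
  fun i => ∑ j, ((LinearMap.toMatrix' w.toLinearMap) i j : ℂ) * z j

/-- `φ` is invariant under the action of the Weyl group `W(R)` on the lattice variable. -/
def WeylInvariant {l : ℕ} (R : IrreducibleRootSystem l) (φ : ℂ → (Fin l → ℂ) → ℂ) : Prop :=
  ∀ w ∈ weylGroup R, ∀ τ : ℂ, 0 < τ.im → ∀ z : Fin l → ℂ, φ τ (actW w z) = φ τ z

/-- The Jacobi theta function
`ϑ(τ,z) = q^{1/8}(ζ^{1/2}-ζ^{-1/2}) ∏_{n≥1} (1-q^n ζ)(1-q^n ζ^{-1})(1-q^n)`. -/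
def jtheta (τ z : ℂ) : ℂ :=
  Complex.exp ((Real.pi : ℂ) * Complex.I * τ / 4) *
    (Complex.exp ((Real.pi : ℂ) * Complex.I * z) -
      Complex.exp (-((Real.pi : ℂ) * Complex.I * z))) *
    ∏' n : ℕ,
      ((1 - Complex.exp (2 * (Real.pi : ℂ) * Complex.I * ((n : ℂ) + 1) * τ) *
            Complex.exp (2 * (Real.pi : ℂ) * Complex.I * z)) *
       (1 - Complex.exp (2 * (Real.pi : ℂ) * Complex.I * ((n : ℂ) + 1) * τ) *
            Complex.exp (-(2 * (Real.pi : ℂ) * Complex.I * z))) *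
       (1 - Complex.exp (2 * (Real.pi : ℂ) * Complex.I * ((n : ℂ) + 1) * τ)))

/-- The Dedekind eta function `η(τ) = q^{1/24} ∏_{n≥1} (1-q^n)`. -/
def dedekindEta (τ : ℂ) : ℂ :=
  Complex.exp ((Real.pi : ℂ) * Complex.I * τ / 12) *
    ∏' n : ℕ, (1 - Complex.exp (2 * (Real.pi : ℂ) * Complex.I * ((n : ℂ) + 1) * τ))

/-- `P` is a system of positive roots of `R`, cut out by a linear functional. -/
def IsPositiveSystem {l : ℕ} (R : IrreducibleRootSystem l)
    (P : Finset (Fin l → ℝ)) : Prop :=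
  P ⊆ R.roots ∧ ∃ f : Fin l → ℝ, (∀ r ∈ R.roots, dotR f r ≠ 0) ∧
    ∀ r ∈ R.roots, (r ∈ P ↔ 0 < dotR f r)

/-- The theta block `Φ_R(τ,𝔷) = ∏_{r ∈ R^∨, r > 0} ϑ(τ,(r,𝔷))/η(τ)^3`, the product
ranging over the positive roots of the dual root system `R^∨` (equivalently, over the
coroots of the positive roots in `P`). -/
def PhiR {l : ℕ} (P : Finset (Fin l → ℝ)) (τ : ℂ) (z : Fin l → ℂ) : ℂ :=
  ∏ r ∈ P, (jtheta τ (dotCC (rc (coroot r)) z) / dedekindEta τ ^ 3)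


/-!
With `ζ = exp (2πiz)`, the quotient `ϑ(τ, z) / η(τ)³` equals `ζ ^ (1 / 2)` times
`(1 - ζ⁻¹) ∏ (1 - qⁿζ)(1 - qⁿζ⁻¹) / (1 - qⁿ)²`, whose `q⁰`-part `1 - ζ⁻¹` has the constant term
`1` as its unique term of maximal height. This property is stable under products, so `Φ_R` is
`exp (2πi(ρ, z))` times an expansion with constant coefficient `1`, where `ρ` is half the sum of
the positive coroots: the coefficient of `q⁰ exp (2πi(ρ, z))` in `Φ_R` is `1`.

The vector `ρ` lies in the dual of the root lattice: for a root `r`, the terms of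
`2(r, ρ) = ∑ (r, s^∨)` cancel modulo `2` in pairs `s, ±s_r(s)`, and the terms fixed by this
involution are even.
-/

section Expansion

open Finset

section QProduct

variable {𝕜 : Type*} [NormedField 𝕜] {q : 𝕜}

theorem summable_norm_neg_pow_add_mul (hq : ‖q‖ < 1) (k : ℕ) (x : 𝕜) :
    Summable fun n : ℕ => ‖-(q ^ (n + k) * x)‖ := by
  simp only [norm_neg, norm_mul, norm_pow]
  exact ((summable_nat_add_iff k).mpr
    (summable_geometric_of_lt_one (norm_nonneg q) hq)).mul_right ‖x‖

variable [CompleteSpace 𝕜]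

theorem multipliable_one_sub_pow_add_mul (hq : ‖q‖ < 1) (k : ℕ) (x : 𝕜) :
    Multipliable fun n : ℕ => 1 - q ^ (n + k) * x := by
  simpa only [sub_eq_add_neg] using
    multipliable_one_add_of_summable (summable_norm_neg_pow_add_mul hq k x)

theorem hasSum_tprod_one_sub_pow_add_mul (hq : ‖q‖ < 1) (k : ℕ) (x : 𝕜) :
    HasSum (fun S : Finset ℕ => (-1) ^ #S * (q ^ (∑ n ∈ S, (n + k)) * x ^ #S))
      (∏' n : ℕ, (1 - q ^ (n + k) * x)) := by
  have hs := summable_finsetProd_of_summable_norm (summable_norm_neg_pow_add_mul hq k x)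
  simp only [sub_eq_add_neg]
  rw [tprod_one_add hs]
  refine hs.hasSum.congr_fun fun S => ?_
  rw [prod_neg, prod_mul_distrib, prod_pow_eq_pow_sum, prod_const]

theorem tprod_one_sub_pow_succ_ne_zero (hq : ‖q‖ < 1) : ∏' n : ℕ, (1 - q ^ (n + 1)) ≠ 0 := by
  have hs := summable_norm_neg_pow_add_mul hq 1 1
  simp only [mul_one] at hs
  simp only [sub_eq_add_neg]
  refine tprod_one_add_ne_zero_of_summable (fun n h => ?_) hs
  have hpow : ‖q‖ ^ (n + 1) = 1 := by
    rw [← norm_pow, ← sub_eq_zero.mp ((sub_eq_add_neg _ _).trans h), norm_one]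
  exact (pow_lt_one₀ (norm_nonneg q) hq n.succ_ne_zero).ne hpow

end QProduct

/-- The quotient `ϑ(τ, z) / η(τ)³` divided by its leading factor `ζ ^ (1 / 2)`, as a function of
`q = exp (2πiτ)` and `ζ = exp (2πiz)`. The factor `1 - ζ⁻¹` is the term `n = 0` of the second
product. -/
def normalizedTheta (q ζ : ℂ) : ℂ :=
  (∏' n : ℕ, (1 - q ^ (n + 1) * ζ)) * (∏' n : ℕ, (1 - q ^ (n + 0) * ζ⁻¹)) *
    (∏' n : ℕ, (1 - q ^ (n + 1)))⁻¹ ^ 2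

theorem jtheta_div_dedekindEta_pow_three {τ : ℂ} (hτ : 0 < τ.im) (w : ℂ) :
    jtheta τ w / dedekindEta τ ^ 3 =
      exp (Real.pi * I * w) *
        normalizedTheta (exp (2 * Real.pi * I * τ)) (exp (2 * Real.pi * I * w)) := by
  set q := exp (2 * Real.pi * I * τ) with hq_def
  set ζ := exp (2 * Real.pi * I * w) with hζ_def
  have hq : ‖q‖ < 1 := UpperHalfPlane.norm_exp_two_pi_I_lt_one ⟨τ, hτ⟩
  have hq_pow (n : ℕ) : exp (2 * Real.pi * I * (n + 1) * τ) = q ^ (n + 1) := by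
    rw [hq_def, ← exp_nat_mul]
    push_cast
    ring_nf
  have hζ_inv : exp (-(2 * Real.pi * I * w)) = ζ⁻¹ := exp_neg _
  have hA := multipliable_one_sub_pow_add_mul hq 1 ζ
  have hB := multipliable_one_sub_pow_add_mul hq 1 ζ⁻¹
  have hC := ModularForm.multipliable_one_sub_pow hq
  have hC_ne := tprod_one_sub_pow_succ_ne_zero hq
  have hB_zero : ∏' n : ℕ, (1 - q ^ (n + 0) * ζ⁻¹) =
      (1 - ζ⁻¹) * ∏' n : ℕ, (1 - q ^ (n + 1) * ζ⁻¹) := by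
    simpa using tprod_eq_zero_mul' (f := fun n => 1 - q ^ (n + 0) * ζ⁻¹) hB
  have h_sine : exp (Real.pi * I * w) - exp (-(Real.pi * I * w)) =
      exp (Real.pi * I * w) * (1 - ζ⁻¹) := by
    rw [hζ_def, ← exp_neg, mul_sub, mul_one, ← exp_add]
    ring_nf
  have h_eta : exp (Real.pi * I * τ / 12) ^ 3 = exp (Real.pi * I * τ / 4) := by
    rw [← exp_nat_mul]
    push_cast
    ring_nf
  simp only [jtheta, dedekindEta, normalizedTheta, hq_pow, hζ_inv]
  rw [(hA.mul hB).tprod_mul hC, hA.tprod_mul hB, hB_zero, h_sine, mul_pow, h_eta]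
  field_simp [exp_ne_zero]

variable {A : Type*} [AddCommGroup A] {L : AddSubgroup A} {ht : A →+ ℝ}

/-- An expansion `Φ(q, χ) = ∑ᵢ cᵢ qⁿⁱ χ(aᵢ)` with exponents `aᵢ` in `L` that is monic for the
height `ht`: the constant monomial occurs once, with coefficient `1`, and every other term without
`q` has negative height. A point `z` of the torus enters through the character
`χ = exp (2πi⟨·, z⟩)`. -/
structure MonicExpansion (L : AddSubgroup A) (ht : A →+ ℝ) (Φ : ℂ → AddChar A ℂ → ℂ) where
  ι : Type
  coeff : ι → ℂ
  qExp : ι → ℕ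
  zExp : ι → A
  hasSum {q : ℂ} (hq : ‖q‖ < 1) (χ : AddChar A ℂ) :
    HasSum (fun i => coeff i * (q ^ qExp i * χ (zExp i))) (Φ q χ)
  zExp_mem (i : ι) : zExp i ∈ L
  lead : ι
  coeff_lead : coeff lead = 1
  qExp_lead : qExp lead = 0
  zExp_lead : zExp lead = 0
  height_neg {i : ι} (hi : i ≠ lead) (hq : qExp i = 0) : ht (zExp i) < 0

namespace MonicExpansion

variable {Φ Ψ : ℂ → AddChar A ℂ → ℂ}

theorem height_nonpos (E : MonicExpansion L ht Φ) {i : E.ι} (hi : E.qExp i = 0) :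
    ht (E.zExp i) ≤ 0 := by
  rcases eq_or_ne i E.lead with rfl | hne
  · rw [E.zExp_lead, map_zero]
  · exact (E.height_neg hne hi).le

/-- The expansion of the constant `1`. -/
def one : MonicExpansion L ht fun _ _ => 1 where
  ι := Unit
  coeff _ := 1
  qExp _ := 0
  zExp _ := 0
  hasSum _ χ := by simp
  zExp_mem _ := L.zero_mem
  lead := ()
  coeff_lead := rfl
  qExp_lead := rfl
  zExp_lead := rfl
  height_neg hi := absurd rfl hi

/-- The Cauchy product of two expansions. -/
def mul (E : MonicExpansion L ht Φ) (F : MonicExpansion L ht Ψ) :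
    MonicExpansion L ht fun q χ => Φ q χ * Ψ q χ where
  ι := E.ι × F.ι
  coeff p := E.coeff p.1 * F.coeff p.2
  qExp p := E.qExp p.1 + F.qExp p.2
  zExp p := E.zExp p.1 + F.zExp p.2
  hasSum hq χ := by
    have hE := E.hasSum hq χ
    have hF := F.hasSum hq χ
    have hsum := summable_mul_of_summable_norm hE.summable.norm hF.summable.norm
    refine (hE.mul hF hsum).congr_fun fun p => ?_
    rw [χ.map_add_eq_mul, pow_add]
    ring
  zExp_mem p := L.add_mem (E.zExp_mem p.1) (F.zExp_mem p.2)
  lead := (E.lead, F.lead)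
  coeff_lead := by rw [E.coeff_lead, F.coeff_lead, one_mul]
  qExp_lead := by rw [E.qExp_lead, F.qExp_lead]
  zExp_lead := by rw [E.zExp_lead, F.zExp_lead, add_zero]
  height_neg {p} hp hq := by
    obtain ⟨hqE, hqF⟩ := Nat.add_eq_zero_iff.mp hq
    rw [map_add]
    rcases eq_or_ne p.1 E.lead with hE | hE
    · have hF : p.2 ≠ F.lead := fun hF => hp (Prod.ext hE hF)
      exact add_neg_of_nonpos_of_neg (E.height_nonpos hqE) (F.height_neg hF hqF)
    · exact add_neg_of_neg_of_nonpos (E.height_neg hE hqE) (F.height_nonpos hqF)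

/-- Transport of an expansion along an equality of functions on the unit disc. -/
def congr (E : MonicExpansion L ht Φ) (h : ∀ q : ℂ, ‖q‖ < 1 → ∀ χ, Φ q χ = Ψ q χ) :
    MonicExpansion L ht Ψ :=
  { E with hasSum := fun hq χ => h _ hq χ ▸ E.hasSum hq χ }

theorem nonempty_prod {α : Type*} (s : Finset α) {Φ : α → ℂ → AddChar A ℂ → ℂ}
    (h : ∀ r ∈ s, Nonempty (MonicExpansion L ht (Φ r))) :
    Nonempty (MonicExpansion L ht fun q χ => ∏ r ∈ s, Φ r q χ) := by
  classical
  induction s using Finset.induction_on with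
  | empty => exact ⟨one⟩
  | insert a s ha ih =>
    obtain ⟨E⟩ := h a (mem_insert_self a s)
    obtain ⟨F⟩ := ih fun r hr => h r (mem_insert_of_mem hr)
    simp only [prod_insert ha]
    exact ⟨E.mul F⟩

/-- The expansion of the infinite product `∏ₙ (1 - qⁿ⁺ᵏ χ(a))` over the finite subsets of `ℕ`. -/
def qProduct {a : A} (ha : a ∈ L) (k : ℕ) (hk : k = 0 → ht a < 0) :
    MonicExpansion L ht fun q χ => ∏' n : ℕ, (1 - q ^ (n + k) * χ a) where
  ι := Finset ℕ
  coeff S := (-1) ^ #S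
  qExp S := ∑ n ∈ S, (n + k)
  zExp S := #S • a
  hasSum hq χ := by
    simpa only [χ.map_nsmul_eq_pow] using hasSum_tprod_one_sub_pow_add_mul hq k (χ a)
  zExp_mem S := L.nsmul_mem ha _
  lead := ∅
  coeff_lead := by rw [card_empty, pow_zero]
  qExp_lead := sum_empty
  zExp_lead := by rw [card_empty, zero_nsmul]
  height_neg {S} hS hq := by
    obtain ⟨n, hn⟩ := nonempty_iff_ne_empty.mpr hS
    have hk0 : k = 0 := (Nat.add_eq_zero_iff.mp (sum_eq_zero_iff.mp hq n hn)).2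
    rw [map_nsmul]
    exact nsmul_neg (hk hk0) (card_ne_zero_of_mem hn)

/-- The Taylor expansion at `0` of a holomorphic function of `q` alone. -/
def taylor {g : ℂ → ℂ} (hg : DifferentiableOn ℂ g (Metric.ball 0 1)) (hg0 : g 0 = 1) :
    MonicExpansion L ht fun q _ => g q where
  ι := ℕ
  coeff n := (n.factorial : ℂ)⁻¹ * iteratedDeriv n g 0
  qExp n := n
  zExp _ := 0
  hasSum {q} hq χ := by
    refine (Complex.hasSum_taylorSeries_on_ball hg (mem_ball_zero_iff.mpr hq)).congr_fun
      fun n => ?_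
    simp only [χ.map_zero_eq_one, sub_zero, smul_eq_mul]
    ring
  zExp_mem _ := L.zero_mem
  lead := 0
  coeff_lead := by simp [hg0]
  qExp_lead := rfl
  zExp_lead := rfl
  height_neg hi hq := absurd hq hi

/-- The expansion of `ϑ(τ, z) / (ζ ^ (1 / 2) η(τ)³)` at `ζ = χ(a)`. -/
def theta {a : A} (ha : a ∈ L) (ha_pos : 0 < ht a) :
    MonicExpansion L ht fun q χ => normalizedTheta q (χ a) :=
  have hg : DifferentiableOn ℂ (fun q : ℂ => (∏' n : ℕ, (1 - q ^ (n + 1)))⁻¹ ^ 2)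
      (Metric.ball 0 1) :=
    (ModularForm.differentiableOn_tprod_one_sub_pow.inv fun _ hq =>
      tprod_one_sub_pow_succ_ne_zero (mem_ball_zero_iff.mp hq)).pow 2
  have ha_neg : ht (-a) < 0 := by rwa [map_neg, neg_lt_zero]
  (((qProduct ha 1 fun h => absurd h one_ne_zero).mul
    (qProduct (L.neg_mem ha) 0 fun _ => ha_neg)).mul (taylor hg (by simp))).congr
      fun q _ χ => by simp only [normalizedTheta, χ.map_neg_eq_inv]

/-- The coefficient of `qⁿ χ(a)`: the sum of all coefficients of the expansion attached to that
monomial. -/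
def fourierCoeff (E : MonicExpansion L ht Φ) (n : ℕ) (a : A) : ℂ :=
  ∑' i : (fun i => (E.qExp i, E.zExp i)) ⁻¹' {(n, a)}, E.coeff i

theorem mem_of_fourierCoeff_ne_zero (E : MonicExpansion L ht Φ) {n : ℕ} {a : A}
    (h : E.fourierCoeff n a ≠ 0) : a ∈ L := by
  obtain ⟨⟨i, hi⟩, -⟩ := not_forall.mp fun h0 => h ((tsum_congr h0).trans tsum_zero)
  exact (Prod.mk.inj hi).2 ▸ E.zExp_mem i

theorem hasSum_fourierCoeff (E : MonicExpansion L ht Φ) {q : ℂ} (hq : ‖q‖ < 1)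
    (χ : AddChar A ℂ) :
    HasSum (fun p : ℕ × A => E.fourierCoeff p.1 p.2 * (q ^ p.1 * χ p.2)) (Φ q χ) := by
  refine ((E.hasSum hq χ).tsum_fiberwise fun i => (E.qExp i, E.zExp i)).congr_fun fun p => ?_
  rw [fourierCoeff, ← tsum_mul_right]
  refine tsum_congr fun ⟨i, hi⟩ => ?_
  obtain rfl : (E.qExp i, E.zExp i) = p := hi
  rfl

theorem fourierCoeff_zero_zero (E : MonicExpansion L ht Φ) : E.fourierCoeff 0 0 = 1 := by
  have h_lead : (E.qExp E.lead, E.zExp E.lead) = ((0 : ℕ), (0 : A)) := by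
    rw [E.qExp_lead, E.zExp_lead]
  rw [fourierCoeff, tsum_eq_single ⟨E.lead, h_lead⟩, E.coeff_lead]
  rintro ⟨i, hi⟩ hne
  obtain ⟨hq, hz⟩ := Prod.mk.inj hi
  have hlt := E.height_neg (fun h => hne (Subtype.ext h)) hq
  rw [hz, map_zero] at hlt
  exact absurd hlt (lt_irrefl 0)

end MonicExpansion

end Expansion

section Parity

variable {ι R M N : Type*} [CommRing R] [AddCommGroup M] [Module R M]
  [AddCommGroup N] [Module R N] (Q : RootPairing ι R M N)

theorem reflectionPerm_neg_index (i j : ι) :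
    Q.reflectionPerm i (Q.reflectionPerm j j) =
      Q.reflectionPerm (Q.reflectionPerm i j) (Q.reflectionPerm i j) := by
  refine Q.root.injective ?_
  rw [Q.root_reflectionPerm, Q.root_reflectionPerm j, Q.reflection_apply_self, map_neg,
    ← Q.root_reflectionPerm, Q.root_reflectionPerm (Q.reflectionPerm i j),
    Q.reflection_apply_self]

section Crystallographic

variable [CharZero R] [Q.IsCrystallographic]

theorem pairingIn_reflectionPerm_right (i j : ι) :
    Q.pairingIn ℤ i (Q.reflectionPerm i j) = -Q.pairingIn ℤ i j := by
  rw [Q.pairingIn_reflectionPerm, Q.pairingIn_reflectionPerm_self_left]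

theorem even_pairingIn_of_reflectionPerm_eq_neg [Q.IsReduced] {i j : ι}
    (h : Q.reflectionPerm i j = Q.reflectionPerm j j) : Even (Q.pairingIn ℤ i j) := by
  have h_dep : ¬LinearIndependent R ![Q.root i, Q.root j] := fun hlin => by
    have hroot : Q.root j - Q.pairing j i • Q.root i = -Q.root j := by
      rw [← Q.reflection_apply_root, ← Q.root_reflectionPerm, h, Q.root_reflectionPerm,
        Q.reflection_apply_self]
    have hzero : Q.pairing j i • Q.root i + (-2 : R) • Q.root j = 0 :=
      calc Q.pairing j i • Q.root i + (-2 : R) • Q.root j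
          = -Q.root j - (Q.root j - Q.pairing j i • Q.root i) := by module
        _ = 0 := by rw [hroot, sub_self]
    exact two_ne_zero (neg_eq_zero.mp (LinearIndependent.pair_iff.mp hlin _ _ hzero).2)
  rcases RootPairing.IsReduced.eq_or_eq_neg i j h_dep with hij | hij
  · rw [Q.root.injective hij, Q.pairingIn_same]
    exact even_two
  · rw [Q.root_eq_neg_iff.mp hij, Q.pairingIn_reflectionPerm_self_left, Q.pairingIn_same]
    exact even_two.neg

end Crystallographic

section SignedReflection

variable {Q} {pos : Finset ι} {i j : ι}

open Classical in
/-- The reflection `±sᵢ`, with the sign chosen so that the image lies in the positive system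
`pos`. -/
def signedReflection (Q : RootPairing ι R M N) (pos : Finset ι) (i j : ι) : ι :=
  if Q.reflectionPerm i j ∈ pos then Q.reflectionPerm i j
  else Q.reflectionPerm i (Q.reflectionPerm j j)

theorem signedReflection_of_mem (h : Q.reflectionPerm i j ∈ pos) :
    signedReflection Q pos i j = Q.reflectionPerm i j :=
  if_pos h

theorem signedReflection_of_notMem (h : Q.reflectionPerm i j ∉ pos) :
    signedReflection Q pos i j = Q.reflectionPerm i (Q.reflectionPerm j j) :=
  if_neg h

theorem signedReflection_mem (hpos : ∀ j, Q.reflectionPerm j j ∈ pos ↔ j ∉ pos) :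
    signedReflection Q pos i j ∈ pos := by
  by_cases h : Q.reflectionPerm i j ∈ pos
  · rwa [signedReflection_of_mem h]
  · rw [signedReflection_of_notMem h, reflectionPerm_neg_index]
    exact (hpos _).mpr h

theorem signedReflection_signedReflection (hpos : ∀ j, Q.reflectionPerm j j ∈ pos ↔ j ∉ pos)
    (hj : j ∈ pos) : signedReflection Q pos i (signedReflection Q pos i j) = j := by
  by_cases h : Q.reflectionPerm i j ∈ pos
  · rw [signedReflection_of_mem h, signedReflection_of_mem (by rwa [Q.reflectionPerm_self]),
      Q.reflectionPerm_self]
  · have h_neg : Q.reflectionPerm j j ∉ pos := fun hmem => (hpos j).mp hmem hj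
    rw [signedReflection_of_notMem h,
      signedReflection_of_notMem (by rwa [Q.reflectionPerm_self]), ← reflectionPerm_neg_index,
      Q.reflectionPerm_self, ← reflectionPerm_neg_index, Q.reflectionPerm_self]

variable [CharZero R] [Q.IsCrystallographic]

theorem intCast_pairingIn_signedReflection :
    (Q.pairingIn ℤ i (signedReflection Q pos i j) : ZMod 2) = Q.pairingIn ℤ i j := by
  by_cases h : Q.reflectionPerm i j ∈ pos
  · rw [signedReflection_of_mem h, pairingIn_reflectionPerm_right, Int.cast_neg,
      ZMod.neg_eq_self_mod_two]
  · rw [signedReflection_of_notMem h, pairingIn_reflectionPerm_right,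
      Q.pairingIn_reflectionPerm_self_right, neg_neg]

theorem even_pairingIn_of_signedReflection_eq [Q.IsReduced]
    (hj : signedReflection Q pos i j = j) : Even (Q.pairingIn ℤ i j) := by
  by_cases h : Q.reflectionPerm i j ∈ pos
  · have h_neg := pairingIn_reflectionPerm_right Q i j
    rw [← signedReflection_of_mem h, hj, self_eq_neg] at h_neg
    exact h_neg ▸ Even.zero
  · refine even_pairingIn_of_reflectionPerm_eq_neg Q ?_
    rw [← Q.reflectionPerm_self i (Q.reflectionPerm j j), ← signedReflection_of_notMem h, hj]

end SignedReflection

theorem even_sum_pairingIn [CharZero R] [Q.IsCrystallographic] [Q.IsReduced] {pos : Finset ι}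
    (hpos : ∀ j, Q.reflectionPerm j j ∈ pos ↔ j ∉ pos) (i : ι) :
    Even (∑ j ∈ pos, Q.pairingIn ℤ i j) := by
  rw [← ZMod.intCast_eq_zero_iff_even, Int.cast_sum]
  refine Finset.sum_involution (fun j _ => signedReflection Q pos i j) (fun j _ => ?_)
    (fun j _ hne hfix => ?_) (fun j _ => signedReflection_mem hpos)
    (fun j hj => signedReflection_signedReflection hpos hj)
  · rw [intCast_pairingIn_signedReflection, CharTwo.add_self_eq_zero]
  · exact hne (ZMod.intCast_eq_zero_iff_even.mpr (even_pairingIn_of_signedReflection_eq hfix))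

end Parity

section RootSystem

open Module

variable {l : ℕ} {Φ P : Finset (Fin l → ℝ)}

theorem dotR_self_pos {r : Fin l → ℝ} (hr : r ≠ 0) : 0 < dotR r r :=
  (Finset.sum_nonneg fun i _ => mul_self_nonneg (r i)).lt_of_ne'
    (dotProduct_self_eq_zero.not.mpr hr)

theorem dotR_comm (v w : Fin l → ℝ) : dotR v w = dotR w v :=
  dotProduct_comm v w

theorem dotR_smul (c : ℝ) (v w : Fin l → ℝ) : dotR v (c • w) = c * dotR v w :=
  dotProduct_smul c v w

theorem smul_dotR (c : ℝ) (v w : Fin l → ℝ) : dotR (c • v) w = c * dotR v w :=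
  smul_dotProduct c v w

theorem corootForm_apply (r v : Fin l → ℝ) : corootForm r v = 2 * dotR r v / dotR r r :=
  div_mul_eq_mul_div _ _ _

theorem dotR_coroot (v r : Fin l → ℝ) : dotR v (coroot r) = corootForm r v := by
  rw [coroot, dotR_smul, dotR_comm v]
  rfl

theorem coroot_coroot (r : Fin l → ℝ) : coroot (coroot r) = r := by
  rcases eq_or_ne r 0 with rfl | hr
  · simp only [coroot, smul_zero]
  · have hpos := dotR_self_pos hr
    simp only [coroot, smul_dotR, dotR_smul, smul_smul]
    field_simp
    norm_num

theorem corootForm_injective : Function.Injective (corootForm (l := l)) := fun r s h => by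
  rw [← coroot_coroot r, ← coroot_coroot s]
  refine congrArg coroot (dotProduct_eq _ _ fun v => ?_)
  rw [dotProduct_comm, dotProduct_comm _ v]
  exact (dotR_coroot v r).trans ((LinearMap.congr_fun h v).trans (dotR_coroot v s).symm)

/-- A reduced crystallographic root system in `ℝ^l`, not necessarily irreducible, and with no
integrality condition on the inner products of the roots. -/
structure IsReducedRootSystem (Φ : Finset (Fin l → ℝ)) : Prop where
  zero_notMem : (0 : Fin l → ℝ) ∉ Φ
  span_eq_top : Submodule.span ℝ (Φ : Set (Fin l → ℝ)) = ⊤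
  eq_one_or_eq_neg_one {r : Fin l → ℝ} (hr : r ∈ Φ) {c : ℝ} (hc : c • r ∈ Φ) : c = 1 ∨ c = -1
  exists_corootForm_eq {r s : Fin l → ℝ} (hr : r ∈ Φ) (hs : s ∈ Φ) :
    ∃ n : ℤ, corootForm r s = n
  reflection_mem {r s : Fin l → ℝ} (hr : r ∈ Φ) (hs : s ∈ Φ) : s - corootForm r s • r ∈ Φ

namespace IsReducedRootSystem

theorem ne_zero (hΦ : IsReducedRootSystem Φ) {r : Fin l → ℝ} (hr : r ∈ Φ) : r ≠ 0 :=
  ne_of_mem_of_not_mem hr hΦ.zero_notMem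

theorem corootForm_self (hΦ : IsReducedRootSystem Φ) {r : Fin l → ℝ} (hr : r ∈ Φ) :
    corootForm r r = 2 := by
  rw [corootForm_apply, mul_div_cancel_right₀ _ (dotR_self_pos (hΦ.ne_zero hr)).ne']

theorem neg_mem (hΦ : IsReducedRootSystem Φ) {r : Fin l → ℝ} (hr : r ∈ Φ) : -r ∈ Φ := by
  have h := hΦ.reflection_mem hr hr
  rwa [hΦ.corootForm_self hr, two_smul, sub_add_cancel_left] at h

/-- The root system as a root pairing between `ℝ^l` and its dual. -/
def rootPairing (hΦ : IsReducedRootSystem Φ) :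
    RootPairing Φ ℝ (Fin l → ℝ) (Dual ℝ (Fin l → ℝ)) :=
  RootPairing.mk'' (Dual.eval ℝ (Fin l → ℝ)) (Function.Embedding.subtype _)
    ((Function.Embedding.subtype _).trans ⟨corootForm, corootForm_injective⟩)
    (fun r => hΦ.corootForm_self r.2)
    (by
      rintro r _ ⟨s, rfl⟩
      exact ⟨⟨_, hΦ.reflection_mem r.2 s.2⟩, rfl⟩)
    (by simpa using hΦ.span_eq_top)

theorem coe_reflectionPerm_self (hΦ : IsReducedRootSystem Φ) (r : Φ) :
    (hΦ.rootPairing.reflectionPerm r r : Fin l → ℝ) = -r := by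
  have h := hΦ.rootPairing.root_reflectionPerm r r
  rwa [hΦ.rootPairing.reflection_apply_self] at h

instance (hΦ : IsReducedRootSystem Φ) : hΦ.rootPairing.IsCrystallographic where
  exists_value r s := by
    obtain ⟨n, hn⟩ := hΦ.exists_corootForm_eq s.2 r.2
    exact ⟨n, hn.symm⟩

instance (hΦ : IsReducedRootSystem Φ) : hΦ.rootPairing.IsReduced where
  eq_or_eq_neg r s h := by
    change ¬LinearIndependent ℝ ![(r : Fin l → ℝ), s] at h
    rw [LinearIndependent.pair_iff' (hΦ.ne_zero r.2)] at h
    push Not at h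
    obtain ⟨c, hc⟩ := h
    rcases hΦ.eq_one_or_eq_neg_one r.2 (hc ▸ s.2) with rfl | rfl
    · left
      exact (one_smul ℝ _).symm.trans hc
    · right
      exact neg_eq_iff_eq_neg.mp ((neg_one_smul ℝ _).symm.trans hc)

end IsReducedRootSystem

theorem IrreducibleRootSystem.isReducedRootSystem (R : IrreducibleRootSystem l) :
    IsReducedRootSystem R.roots where
  zero_notMem := R.zero_not_mem
  span_eq_top := R.spans
  eq_one_or_eq_neg_one hr _ hc := R.reduced _ hr _ hc
  exists_corootForm_eq {r s} hr hs := by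
    obtain ⟨n, hn⟩ := R.crystal r hr s hs
    have h_pos := dotR_self_pos (ne_of_mem_of_not_mem hr R.zero_not_mem)
    exact ⟨n, by rw [corootForm_apply, hn, mul_div_cancel_right₀ _ h_pos.ne']⟩
  reflection_mem hr hs := by
    simpa only [corootForm_apply] using R.reflect _ hr _ hs

/-- The vectors having integral inner product with every element of `Φ`; for a root system, the
dual of the root lattice. -/
def integralDual (Φ : Finset (Fin l → ℝ)) : AddSubgroup (Fin l → ℝ) :=
  ⨅ r ∈ Φ, (Int.castAddHom ℝ).range.comap (dotLin r).toAddMonoidHom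

theorem mem_integralDual {v : Fin l → ℝ} :
    v ∈ integralDual Φ ↔ ∀ r ∈ Φ, ∃ n : ℤ, dotR r v = n := by
  simp only [integralDual, AddSubgroup.mem_iInf, AddSubgroup.mem_comap, AddMonoidHom.mem_range]
  exact forall₂_congr fun _ _ => exists_congr fun _ => eq_comm

theorem coroot_mem_integralDual (hΦ : IsReducedRootSystem Φ) {r : Fin l → ℝ} (hr : r ∈ Φ) :
    coroot r ∈ integralDual Φ :=
  mem_integralDual.mpr fun s hs => by
    simpa only [dotR_coroot] using hΦ.exists_corootForm_eq hr hs

theorem half_sum_coroot_mem_integralDual (hΦ : IsReducedRootSystem Φ) (hPΦ : P ⊆ Φ)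
    (hP : ∀ r ∈ Φ, (-r ∈ P ↔ r ∉ P)) :
    (1 / 2 : ℝ) • ∑ r ∈ P, coroot r ∈ integralDual Φ := by
  refine mem_integralDual.mpr fun s hs => ?_
  let Q := hΦ.rootPairing
  have hpos (r : Φ) :
      Q.reflectionPerm r r ∈ P.subtype (· ∈ Φ) ↔ r ∉ P.subtype (· ∈ Φ) := by
    simpa only [Finset.mem_subtype, Q, hΦ.coe_reflectionPerm_self] using hP r r.2
  obtain ⟨m, hm⟩ := even_sum_pairingIn Q hpos ⟨s, hs⟩
  have h_sum : dotR s (∑ r ∈ P, coroot r) = m + m := by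
    calc dotR s (∑ r ∈ P, coroot r)
        = ∑ r ∈ P, corootForm r s :=
          (map_sum (dotLin s) coroot P).trans (Finset.sum_congr rfl fun r _ => dotR_coroot s r)
      _ = ∑ r ∈ P.subtype (· ∈ Φ), Q.pairing ⟨s, hs⟩ r :=
          (Finset.sum_subtype_of_mem (fun r => corootForm r s) hPΦ).symm
      _ = ((∑ r ∈ P.subtype (· ∈ Φ), Q.pairingIn ℤ ⟨s, hs⟩ r : ℤ) : ℝ) := by
          rw [Int.cast_sum]
          exact Finset.sum_congr rfl fun r _ => (Q.algebraMap_pairingIn ℤ ⟨s, hs⟩ r).symm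
      _ = m + m := by rw [hm, Int.cast_add]
  exact ⟨m, by rw [dotR_smul, h_sum]; ring⟩

end RootSystem

section ThetaBlock

variable {l : ℕ} {Φ P : Finset (Fin l → ℝ)} {f : Fin l → ℝ}

/-- The character `v ↦ exp (2πi(v, z))` of `ℝ^l` attached to a point `z` of `ℂ^l`. -/
def torusChar (z : Fin l → ℂ) : AddChar (Fin l → ℝ) ℂ where
  toFun v := exp (2 * Real.pi * I * dotCC (rc v) z)
  map_zero_eq_one' := by simp [dotCC, rc]
  map_add_eq_mul' v w := by
    simp only [← exp_add, dotCC, rc, Pi.add_apply, ofReal_add, add_mul, Finset.sum_add_distrib,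
      mul_add]

theorem torusChar_apply (z : Fin l → ℂ) (v : Fin l → ℝ) :
    torusChar z v = exp (2 * Real.pi * I * dotCC (rc v) z) :=
  rfl

theorem torusChar_smul (z : Fin l → ℂ) (c : ℝ) (v : Fin l → ℝ) :
    torusChar z (c • v) = exp (2 * Real.pi * I * (c * dotCC (rc v) z)) := by
  simp only [torusChar_apply, dotCC, rc, Pi.smul_apply, smul_eq_mul, ofReal_mul, mul_assoc,
    Finset.mul_sum]

theorem torusChar_sum {α : Type*} (z : Fin l → ℂ) (s : Finset α) (v : α → Fin l → ℝ) :
    torusChar z (∑ a ∈ s, v a) = ∏ a ∈ s, torusChar z (v a) :=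
  map_prod (torusChar z).toMonoidHom (fun a => Multiplicative.ofAdd (v a)) s

theorem jtheta_div_dedekindEta_eq_torusChar_mul {τ : ℂ} (hτ : 0 < τ.im) (z : Fin l → ℂ)
    (v : Fin l → ℝ) :
    jtheta τ (dotCC (rc v) z) / dedekindEta τ ^ 3 =
      torusChar z ((1 / 2 : ℝ) • v) *
        normalizedTheta (exp (2 * Real.pi * I * τ)) (torusChar z v) := by
  rw [jtheta_div_dedekindEta_pow_three hτ, torusChar_smul, torusChar_apply]
  congr 2
  push_cast
  ring

theorem PhiR_eq_torusChar_mul_prod {τ : ℂ} (hτ : 0 < τ.im) (z : Fin l → ℂ) :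
    PhiR P τ z = torusChar z ((1 / 2 : ℝ) • ∑ r ∈ P, coroot r) *
      ∏ r ∈ P, normalizedTheta (exp (2 * Real.pi * I * τ)) (torusChar z (coroot r)) := by
  rw [Finset.smul_sum, torusChar_sum, ← Finset.prod_mul_distrib]
  exact Finset.prod_congr rfl fun r _ => jtheta_div_dedekindEta_eq_torusChar_mul hτ z (coroot r)

theorem MonicExpansion.hasSum_torusChar_mul {L : AddSubgroup (Fin l → ℝ)}
    {ht : (Fin l → ℝ) →+ ℝ} {Ψ : ℂ → AddChar (Fin l → ℝ) ℂ → ℂ} (E : MonicExpansion L ht Ψ)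
    {c : ℝ} (hc : c ≠ 0) (ρ : Fin l → ℝ) {τ : ℂ} (hτ : 0 < τ.im) (z : Fin l → ℂ) :
    HasSum (fun p : ℕ × (Fin l → ℝ) => E.fourierCoeff p.1 (c • p.2 - ρ) *
        exp (2 * Real.pi * I * (p.1 * τ + c * dotCC (rc p.2) z)))
      (torusChar z ρ * Ψ (exp (2 * Real.pi * I * τ)) (torusChar z)) := by
  let shift : ℕ × (Fin l → ℝ) ≃ ℕ × (Fin l → ℝ) :=
    (Equiv.refl ℕ).prodCongr ((LinearEquiv.smulOfNeZero ℝ _ c hc).toEquiv.trans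
      (Equiv.subRight ρ))
  have hq := UpperHalfPlane.norm_exp_two_pi_I_lt_one ⟨τ, hτ⟩
  refine (shift.hasSum_iff.mpr
    ((E.hasSum_fourierCoeff hq (torusChar z)).mul_left (torusChar z ρ))).congr_fun
      fun ⟨n, v⟩ => ?_
  have h_char : torusChar z ρ * torusChar z (c • v - ρ) =
      exp (2 * Real.pi * I * (c * dotCC (rc v) z)) := by
    rw [← AddChar.map_add_eq_mul, add_sub_cancel, torusChar_smul]
  have h_exp : exp (2 * Real.pi * I * (n * τ + c * dotCC (rc v) z)) =
      exp (2 * Real.pi * I * τ) ^ n * exp (2 * Real.pi * I * (c * dotCC (rc v) z)) := by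
    rw [← exp_nat_mul, ← exp_add]
    ring_nf
  change E.fourierCoeff n (c • v - ρ) * _ = torusChar z ρ *
    (E.fourierCoeff n (c • v - ρ) * (exp (2 * Real.pi * I * τ) ^ n * torusChar z (c • v - ρ)))
  rw [h_exp, ← h_char]
  ring

theorem nonempty_monicExpansion_prod_normalizedTheta (hΦ : IsReducedRootSystem Φ) (hPΦ : P ⊆ Φ)
    (hf : ∀ r ∈ P, 0 < dotR f r) :
    Nonempty (MonicExpansion (integralDual Φ) (dotLin f).toAddMonoidHom
      fun q χ => ∏ r ∈ P, normalizedTheta q (χ (coroot r))) :=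
  MonicExpansion.nonempty_prod P fun r hr => by
    have hr_pos : 0 < dotR r r := dotR_self_pos (hΦ.ne_zero (hPΦ hr))
    have h_height : 0 < dotR f (coroot r) := by
      rw [coroot, dotR_smul]
      exact mul_pos (div_pos two_pos hr_pos) (hf r hr)
    exact ⟨MonicExpansion.theta (coroot_mem_integralDual hΦ (hPΦ hr)) h_height⟩

theorem neg_mem_iff_notMem (hΦ : IsReducedRootSystem Φ) (hf : ∀ r ∈ Φ, dotR f r ≠ 0)
    (hP : ∀ r ∈ Φ, (r ∈ P ↔ 0 < dotR f r)) {r : Fin l → ℝ} (hr : r ∈ Φ) :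
    -r ∈ P ↔ r ∉ P := by
  have h_neg : dotR f (-r) = -dotR f r := map_neg (dotLin f) r
  rw [hP r hr, hP (-r) (hΦ.neg_mem hr), h_neg, neg_pos, not_lt]
  exact (hf r hr).le_iff_lt.symm

theorem PhiR_q0_term_nonzero_general (hΦ : IsReducedRootSystem Φ) {ε : ℕ} (hε : ε ≠ 0)
    (hPΦ : P ⊆ Φ) (hf : ∀ r ∈ Φ, dotR f r ≠ 0) (hP : ∀ r ∈ Φ, (r ∈ P ↔ 0 < dotR f r)) :
    ∃ c : ℕ → (Fin l → ℝ) → ℂ,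
      ((∀ n ℓ, c n ℓ ≠ 0 → ∀ r ∈ Φ, ∃ m : ℤ, (ε : ℝ) * dotR ℓ r = m) ∧
        ∀ τ : ℂ, 0 < τ.im → ∀ z : Fin l → ℂ,
          HasSum (fun p : ℕ × (Fin l → ℝ) => c p.1 p.2 *
            exp (2 * Real.pi * I * (p.1 * τ + ε * dotCC (rc p.2) z))) (PhiR P τ z)) ∧
      ∃ ℓ, c 0 ℓ ≠ 0 := by
  have hε' : (ε : ℝ) ≠ 0 := Nat.cast_ne_zero.mpr hε
  obtain ⟨E⟩ := nonempty_monicExpansion_prod_normalizedTheta (f := f) hΦ hPΦ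
    fun r hr => (hP r (hPΦ hr)).mp hr
  let ρ : Fin l → ℝ := (1 / 2 : ℝ) • ∑ r ∈ P, coroot r
  have hρ : ρ ∈ integralDual Φ :=
    half_sum_coroot_mem_integralDual hΦ hPΦ fun r hr => neg_mem_iff_notMem hΦ hf hP hr
  refine ⟨fun n ℓ => E.fourierCoeff n ((ε : ℝ) • ℓ - ρ),
    ⟨fun n ℓ hne r hr => ?_, fun τ hτ z => ?_⟩, (ε : ℝ)⁻¹ • ρ, ?_⟩
  · have h_mem := add_mem (E.mem_of_fourierCoeff_ne_zero hne) hρ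
    rw [sub_add_cancel] at h_mem
    simpa only [dotR_comm r, smul_dotR] using mem_integralDual.mp h_mem r hr
  · rw [PhiR_eq_torusChar_mul_prod hτ]
    simpa only [ofReal_natCast] using E.hasSum_torusChar_mul hε' ρ hτ z
  · simp only [smul_inv_smul₀ hε', sub_self, E.fourierCoeff_zero_zero, ne_eq, one_ne_zero,
      not_false_eq_true]

theorem EpsFor.ne_zero {R : IrreducibleRootSystem l} {ε : ℕ} (hε : EpsFor R ε) : ε ≠ 0 := by
  by_cases h : RootLatticeEven R
  · exact hε.1 h ▸ one_ne_zero
  · exact hε.2 h ▸ two_ne_zero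

end ThetaBlock

/-- The theta block `Φ_R` has a non-zero Fourier coefficient of type
`f(0,ℓ)`: its `q⁰`-term is not identically zero. -/
theorem PhiR_q0_term_nonzero {l : ℕ} (R : IrreducibleRootSystem l)
    (ε : ℕ) (hε : EpsFor R ε)
    (P : Finset (Fin l → ℝ)) (hP : IsPositiveSystem R P) :
    ∃ c : ℕ → (Fin l → ℝ) → ℂ, FourierRepR R ε (PhiR P) c ∧ ∃ ℓ, c 0 ℓ ≠ 0 := by
  obtain ⟨hPR, f, hf, hPf⟩ := hP
  exact PhiR_q0_term_nonzero_general R.isReducedRootSystem hε.ne_zero hPR hf hPf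

end
end

section
/- Let g = J(A_1^{E8},…,A_5^{E8},B_2^{E8},…,B_6^{E8})/Φ_{E8} ∈ M_{172}(SL₂(ℤ)). Then the Fourier expansion of g is O(q^8), so g/Δ^8 ∈ M_{76}(SL₂(ℤ)); consequently g = Δ^8·E_4·h for some modular form h of weight 72 on SL₂(ℤ), where Δ = η^{24} and E_4 is the Eisenstein series of weight 4. -/
open Complex Matrix

noncomputable section

/-- The Gram matrix of the root lattice `E_8` (in a basis of simple roots: a chain
of nodes 0–6 with node 7 attached to node 4). -/
def E8Gram : Matrix (Fin 8) (Fin 8) ℤ :=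
  !![2,-1,0,0,0,0,0,0;
     -1,2,-1,0,0,0,0,0;
     0,-1,2,-1,0,0,0,0;
     0,0,-1,2,-1,0,0,0;
     0,0,0,-1,2,-1,0,-1;
     0,0,0,0,-1,2,-1,0;
     0,0,0,0,0,-1,2,0;
     0,0,0,0,-1,0,0,2]

/-- The integral bilinear form of the `E_8` lattice. -/
def pairE8 (v w : Fin 8 → ℤ) : ℤ := ∑ i, ∑ j, v i * E8Gram i j * w j

/-- The Weyl group `W(E_8)`: the group of lattice automorphisms generated by the
reflections in the 240 roots of `E_8` (the vectors of norm 2), realized as a set of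
integral matrices.  (Each reflection is an involution, so the closure as a monoid is
already a group.) -/
def weylE8 : Set (Matrix (Fin 8) (Fin 8) ℤ) :=
  (Submonoid.closure {S : Matrix (Fin 8) (Fin 8) ℤ |
    ∃ r : Fin 8 → ℤ, pairE8 r r = 2 ∧
      ∀ v : Fin 8 → ℤ, S.mulVec v = fun i => v i - pairE8 r v * r i} :
    Submonoid (Matrix (Fin 8) (Fin 8) ℤ))

/-- The theta block `Φ_{E_8}(τ,𝔷) = ∏_{r > 0} ϑ(τ,(r,𝔷))/η(τ)^3`, the product ranging
over the 120 positive roots of `E_8` (the norm 2 vectors with non-negative coordinates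
in the basis of simple roots). -/
def PhiE8 (τ : ℂ) (z : Fin 8 → ℂ) : ℂ :=
  ∏ᶠ (r : Fin 8 → ℤ) (_ : pairE8 r r = 2 ∧ ∀ i, 0 ≤ r i),
    (jtheta τ (pairC E8Gram (zc r) z) / dedekindEta τ ^ 3)

/-- The weights of Sakai's forms `A₁,...,A₅,B₂,...,B₆`. -/
def sakaiWt : Fin 9 → ℤ := ![4, 4, 4, 4, 4, 6, 6, 6, 6]

/-- The indices of Sakai's forms `A₁,...,A₅,B₂,...,B₆`. -/
def sakaiIdx : Fin 9 → ℕ := ![1, 2, 3, 4, 5, 2, 3, 4, 6]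

/-- The normalized Eisenstein series `E₄(τ) = 1 + 240 ∑_{n≥1} σ₃(n) qⁿ`. -/
def E4 (τ : ℂ) : ℂ :=
  1 + 240 * ∑' n : ℕ, ((ArithmeticFunction.sigma 3 (n + 1) : ℕ) : ℂ) *
    Complex.exp (2 * (Real.pi : ℂ) * Complex.I * ((n : ℂ) + 1) * τ)

/-!
Since every `F j` is `1 + O(q)`, all its partial derivatives in `z` are `O(q)`; eight rows of the
Jacobian consist of such derivatives, so `J(F) = O(q⁸)` for fixed `z`. As `im τ → ∞` the theta block
`Φ` tends to the Weyl denominator of `E₈`, which does not vanish at `z = iρ` for the Weyl vector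
`ρ`, so `g = O(q⁸)` and `Δ⁸` divides `g`. Finally, a modular form of weight not divisible by `3`
vanishes at `exp (2πi / 3)`, the only zero of `E₄` modulo `SL₂(ℤ)`, and hence is a multiple of `E₄`;
algebraically, one subtracts a multiple of `E₄` to reach a cusp form, divides by `Δ` and inducts on
the weight.
-/

open Filter Topology Asymptotics
open UpperHalfPlane (atImInfty)
open scoped UpperHalfPlane

section FourierSeries

variable {l : ℕ} {M : Matrix (Fin l) (Fin l) ℤ}

/-- The summand of index `p = (n, ℓ)` in the Fourier series `∑ c(n, ℓ) qⁿ ζ^ℓ` of `FourierRep`. -/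
def fourierTerm (M : Matrix (Fin l) (Fin l) ℤ) (c : ℕ → (Fin l → ℚ) → ℂ) (τ : ℂ)
    (z : Fin l → ℂ) (p : ℕ × (Fin l → ℚ)) : ℂ :=
  c p.1 p.2 * cexp (2 * (Real.pi : ℂ) * I * ((p.1 : ℂ) * τ + pairC M (qc p.2) z))

/-- `φ = 1 + O(q)`: the `q⁰`-term of the Fourier expansion of `φ` is the constant `1`. -/
def HasUnitQZeroTerm (M : Matrix (Fin l) (Fin l) ℤ) (φ : ℂ → (Fin l → ℂ) → ℂ) : Prop :=
  ∃ c : ℕ → (Fin l → ℚ) → ℂ, FourierRep M φ c ∧ ∀ ℓ, c 0 ℓ = if ℓ = 0 then 1 else 0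

theorem pairC_add_smul (v z w : Fin l → ℂ) (u : ℂ) :
    pairC M v (z + u • w) = pairC M v z + u * pairC M v w := by
  simp only [pairC, Pi.add_apply, Pi.smul_apply, smul_eq_mul, mul_add, Finset.sum_add_distrib,
    Finset.mul_sum]
  congr! 3
  ring

theorem pairC_qc_qc (v w : Fin l → ℚ) : pairC M (qc v) (qc w) = ((pairQ M v w : ℝ) : ℂ) := by
  simp [pairC, pairQ, qc]

theorem norm_fourierTerm (c : ℕ → (Fin l → ℚ) → ℂ) (τ : ℂ) (z : Fin l → ℂ)
    (p : ℕ × (Fin l → ℚ)) :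
    ‖fourierTerm M c τ z p‖ =
      ‖c p.1 p.2‖ * Real.exp (-2 * Real.pi * (p.1 * τ.im + (pairC M (qc p.2) z).im)) := by
  rw [fourierTerm, norm_mul, Complex.norm_exp]
  congr 2
  simp [mul_assoc, mul_add]

/- The factor `|exp (2πi u (ℓ, v))|` is at most the sum of its values at `u = i` and `u = -i`. -/
theorem norm_fourierTerm_add_smul_le {c : ℕ → (Fin l → ℚ) → ℂ} (hc : ∀ ℓ, c 0 ℓ = 0) {τ u : ℂ}
    (hτ : 1 ≤ τ.im) (hu : |u.im| ≤ 1) (z : Fin l → ℂ) (v : Fin l → ℚ) (p : ℕ × (Fin l → ℚ)) :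
    ‖fourierTerm M c τ (z + u • qc v) p‖ ≤ Real.exp (-2 * Real.pi * (τ.im - 1)) *
      (‖fourierTerm M c I (z + I • qc v) p‖ + ‖fourierTerm M c I (z + (-I) • qc v) p‖) := by
  obtain ⟨n, ℓ⟩ := p
  rcases Nat.eq_zero_or_pos n with rfl | hn
  · simp [fourierTerm, hc]
  set a : ℝ := (pairQ M ℓ v : ℝ)
  have him (w : ℂ) :
      (pairC M (qc ℓ) (z + w • qc v)).im = (pairC M (qc ℓ) z).im + w.im * a := by
    rw [pairC_add_smul, pairC_qc_qc, add_im, im_mul_ofReal]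
  have hua : -|a| ≤ u.im * a :=
    (neg_le_neg (by simpa [abs_mul] using mul_le_of_le_one_left (abs_nonneg a) hu)).trans
      (neg_abs_le _)
  have hbound (s : ℝ) (hs : s ≤ u.im * a) :
      Real.exp (-2 * Real.pi * (n * τ.im + ((pairC M (qc ℓ) z).im + u.im * a))) ≤
        Real.exp (-2 * Real.pi * (τ.im - 1)) *
          Real.exp (-2 * Real.pi * (n * 1 + ((pairC M (qc ℓ) z).im + s))) := by
    have hn' : (1 : ℝ) ≤ n := by exact_mod_cast hn
    rw [← Real.exp_add, ← mul_add]
    refine Real.exp_le_exp.mpr (mul_le_mul_of_nonpos_left ?_ (by linarith [Real.pi_pos]))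
    nlinarith
  simp only [norm_fourierTerm, him, I_im, neg_im, ← mul_add ‖c n ℓ‖,
    mul_left_comm (Real.exp _) ‖c n ℓ‖]
  gcongr
  rw [mul_add (Real.exp _)]
  rcases abs_choice a with habs | habs <;> rw [habs] at hua
  · exact (hbound (-1 * a) (by linarith)).trans (le_add_of_nonneg_left (by positivity))
  · exact (hbound (1 * a) (by linarith)).trans (le_add_of_nonneg_right (by positivity))

variable {φ : ℂ → (Fin l → ℂ) → ℂ}

theorem HasUnitQZeroTerm.exists_hasSum_sub_one (h : HasUnitQZeroTerm M φ) :
    ∃ c : ℕ → (Fin l → ℚ) → ℂ, (∀ ℓ, c 0 ℓ = 0) ∧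
      ∀ τ : ℂ, 0 < τ.im → ∀ z, HasSum (fourierTerm M c τ z) (φ τ z - 1) := by
  obtain ⟨c, ⟨-, hsum⟩, hc⟩ := h
  refine ⟨fun n ℓ => if n = 0 then 0 else c n ℓ, fun ℓ => if_pos rfl, fun τ hτ z => ?_⟩
  have hone : HasSum (fun p : ℕ × (Fin l → ℚ) => if p = (0, 0) then (1 : ℂ) else 0) 1 :=
    hasSum_ite_eq _ _
  refine ((hsum τ hτ z).sub hone).congr_fun ?_
  rintro ⟨n, ℓ⟩
  by_cases hn : n = 0 <;> by_cases hℓ : ℓ = 0 <;>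
    simp [fourierTerm, hn, hℓ, hc, pairC, qc]

theorem HasUnitQZeroTerm.exists_summable_majorant (h : HasUnitQZeroTerm M φ) (z : Fin l → ℂ)
    (v : Fin l → ℚ) :
    ∃ (c : ℕ → (Fin l → ℚ) → ℂ) (b : ℕ × (Fin l → ℚ) → ℝ), Summable b ∧
      ∀ τ u : ℂ, 1 ≤ τ.im → |u.im| ≤ 1 →
        HasSum (fourierTerm M c τ (z + u • qc v)) (φ τ (z + u • qc v) - 1) ∧
        ∀ p, ‖fourierTerm M c τ (z + u • qc v) p‖ ≤ b p * Real.exp (-2 * Real.pi * τ.im) := by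
  obtain ⟨c, hc, hsum⟩ := h.exists_hasSum_sub_one
  have hI (w) : Summable fun p => ‖fourierTerm M c I w p‖ := (hsum I (by simp) w).summable.norm
  refine ⟨c, _, ((hI (z + I • qc v)).add (hI (z + (-I) • qc v))).mul_left
    (Real.exp (2 * Real.pi)), fun τ u hτ hu => ⟨hsum τ (by linarith) _, fun p => ?_⟩⟩
  refine (norm_fourierTerm_add_smul_le hc hτ hu z v p).trans_eq ?_
  have hexp : Real.exp (-2 * Real.pi * (τ.im - 1)) =
      Real.exp (2 * Real.pi) * Real.exp (-2 * Real.pi * τ.im) := by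
    rw [← Real.exp_add]
    ring_nf
  rw [hexp, mul_right_comm]

theorem HasUnitQZeroTerm.exists_norm_sub_one_le (h : HasUnitQZeroTerm M φ) (z : Fin l → ℂ)
    (v : Fin l → ℚ) :
    ∃ C : ℝ, ∀ τ u : ℂ, 1 ≤ τ.im → |u.im| ≤ 1 →
      ‖φ τ (z + u • qc v) - 1‖ ≤ C * Real.exp (-2 * Real.pi * τ.im) := by
  obtain ⟨c, b, hb, hφ⟩ := h.exists_summable_majorant z v
  refine ⟨∑' p, b p, fun τ u hτ hu => ?_⟩
  rw [← (hφ τ u hτ hu).1.tsum_eq, ← tsum_mul_right]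
  exact tsum_of_norm_bounded (hb.mul_right _).hasSum (hφ τ u hτ hu).2

theorem HasUnitQZeroTerm.differentiableOn (h : HasUnitQZeroTerm M φ) (z : Fin l → ℂ)
    (v : Fin l → ℚ) {τ : ℂ} (hτ : 1 ≤ τ.im) :
    DifferentiableOn ℂ (fun u : ℂ => φ τ (z + u • qc v) - 1) (Metric.ball 0 1) := by
  obtain ⟨c, b, hb, hφ⟩ := h.exists_summable_majorant z v
  have him {u : ℂ} (hu : u ∈ Metric.ball 0 1) : |u.im| ≤ 1 :=
    (abs_im_le_norm u).trans (mem_ball_zero_iff.mp hu).le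
  refine (differentiableOn_tsum_of_summable_norm (hb.mul_right (Real.exp (-2 * Real.pi * τ.im)))
    (fun p => ?_) Metric.isOpen_ball fun p u hu => (hφ τ u hτ (him hu)).2 p).congr
    fun u hu => (hφ τ u hτ (him hu)).1.tsum_eq.symm
  simp only [fourierTerm, pairC_add_smul]
  fun_prop

theorem eventually_one_le_im : ∀ᶠ τ : ℍ in atImInfty, 1 ≤ τ.im :=
  tendsto_comap.eventually (eventually_ge_atTop 1)

theorem HasUnitQZeroTerm.isBigO_one (h : HasUnitQZeroTerm M φ) (z : Fin l → ℂ) :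
    (fun τ : ℍ => φ τ z) =O[atImInfty] fun _ => (1 : ℝ) := by
  obtain ⟨C, hC⟩ := h.exists_norm_sub_one_le z 0
  refine IsBigO.of_bound (1 + |C|) ?_
  filter_upwards [eventually_one_le_im] with τ hτ
  have hφ := hC τ 0 hτ (by simp)
  rw [zero_smul, add_zero] at hφ
  have hexp : Real.exp (-2 * Real.pi * (τ : ℂ).im) ≤ 1 := by
    rw [Real.exp_le_one_iff]
    nlinarith [Real.pi_pos, τ.im_pos, τ.coe_im]
  calc ‖φ τ z‖ ≤ ‖(1 : ℂ)‖ + ‖φ τ z - 1‖ := by simpa using norm_add_le (1 : ℂ) (φ τ z - 1)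
    _ ≤ 1 + |C| * 1 := by
      rw [norm_one]
      gcongr
      exact hφ.trans (mul_le_mul (le_abs_self C) hexp (Real.exp_nonneg _) (abs_nonneg C))
    _ = (1 + |C|) * ‖(1 : ℝ)‖ := by simp

theorem pderiv'_eq_deriv (i : Fin l) (φ : ℂ → (Fin l → ℂ) → ℂ) (τ : ℂ) (z : Fin l → ℂ) :
    pderiv' i φ τ z = deriv (fun u : ℂ => φ τ (z + u • qc (Pi.single i 1)) - 1) 0 := by
  have hupdate (w : ℂ) : Function.update z i w = z + (w - z i) • qc (Pi.single i 1) := by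
    ext j
    rcases eq_or_ne j i with rfl | hj <;> simp [qc, *]
  simp only [pderiv', hupdate]
  rw [deriv_comp_sub_const (f := fun u : ℂ => φ τ (z + u • qc (Pi.single i 1))), sub_self,
    deriv_sub_const_fun]

theorem HasUnitQZeroTerm.pderiv'_isBigO (h : HasUnitQZeroTerm M φ) (i : Fin l) (z : Fin l → ℂ) :
    (fun τ : ℍ => pderiv' i φ τ z) =O[atImInfty] fun τ => Real.exp (-2 * Real.pi * τ.im) := by
  obtain ⟨C, hC⟩ := h.exists_norm_sub_one_le z (Pi.single i 1)
  refine IsBigO.of_bound (2 * C) ?_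
  filter_upwards [eventually_one_le_im] with τ hτ
  have hsphere (u : ℂ) (hu : u ∈ Metric.sphere (0 : ℂ) 2⁻¹) :
      ‖φ τ (z + u • qc (Pi.single i 1)) - 1‖ ≤ C * Real.exp (-2 * Real.pi * τ.im) := by
    refine hC τ u hτ ((abs_im_le_norm u).trans ?_)
    rw [mem_sphere_zero_iff_norm.mp hu]
    norm_num
  have hdiff := (h.differentiableOn z (Pi.single i 1) hτ).diffContOnCl_ball
    (Metric.closedBall_subset_ball (x := 0) (by norm_num : (2⁻¹ : ℝ) < 1))
  rw [pderiv'_eq_deriv, Real.norm_of_nonneg (Real.exp_nonneg _)]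
  refine (norm_deriv_le_of_forall_mem_sphere_norm_le (by norm_num) hdiff hsphere).trans_eq ?_
  ring

end FourierSeries

section Jacobian

theorem isBigO_det {α n 𝕜 : Type*} [Fintype n] [DecidableEq n] [NormedField 𝕜]
    {f : Filter α} {A : α → Matrix n n 𝕜} {b : n → α → ℝ}
    (h : ∀ i j, (fun x => A x i j) =O[f] b i) :
    (fun x => (A x).det) =O[f] fun x => ∏ i, b i x := by
  simp only [Matrix.det_apply']
  refine IsBigO.fun_sum fun σ _ => IsBigO.const_mul_left ?_ _
  rw [← funext fun x => Equiv.prod_comp σ (b · x)]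
  exact IsBigO.finsetProd fun i _ => h (σ i) i

theorem jacJacobian_isBigO {l : ℕ} {M : Matrix (Fin l) (Fin l) ℤ}
    {φ : Fin (l + 1) → ℂ → (Fin l → ℂ) → ℂ} (hφ : ∀ j, HasUnitQZeroTerm M (φ j))
    (m : Fin (l + 1) → ℕ) (z : Fin l → ℂ) :
    (fun τ : ℍ => jacJacobian m φ τ z) =O[atImInfty]
      fun τ => Real.exp (-2 * Real.pi * τ.im) ^ l := by
  let b : Fin (l + 1) → ℍ → ℝ :=
    Fin.cons (fun _ => 1) fun _ τ => Real.exp (-2 * Real.pi * τ.im)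
  have hb (τ : ℍ) : ∏ i, b i τ = Real.exp (-2 * Real.pi * τ.im) ^ l := by
    simp [b, Fin.prod_univ_succ]
  simp only [jacJacobian, ← hb]
  refine isBigO_det fun i j => ?_
  cases i using Fin.cases with
  | zero => exact ((hφ j).isBigO_one z).const_mul_left _
  | succ i => exact (hφ j).pderiv'_isBigO i z

end Jacobian

section ThetaBlock

open Function (Periodic.qParam)

theorem qParam_one_pow (n : ℕ) (τ : ℂ) :
    Periodic.qParam 1 τ ^ n = cexp (2 * (Real.pi : ℂ) * I * (n : ℂ) * τ) := by
  rw [Periodic.qParam, ← Complex.exp_nat_mul]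
  congr 1
  push_cast
  ring

theorem summable_pow_succ {r : ℝ} (h₀ : 0 ≤ r) (h₁ : r < 1) : Summable fun n : ℕ => r ^ (n + 1) :=
  (summable_nat_add_iff 1).mpr (summable_geometric_of_lt_one h₀ h₁)

theorem multipliable_one_sub_pow_succ_mul {q : ℂ} (hq : ‖q‖ < 1) (ζ : ℂ) :
    Multipliable fun n : ℕ => 1 - q ^ (n + 1) * ζ := by
  simp only [sub_eq_add_neg]
  refine multipliable_one_add_of_summable ?_
  simpa only [norm_neg, norm_mul, norm_pow] using
    (summable_pow_succ (norm_nonneg q) hq).mul_right ‖ζ‖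

theorem tendsto_tprod_one_sub_pow_succ_mul (ζ : ℂ) :
    Tendsto (fun q : ℂ => ∏' n : ℕ, (1 - q ^ (n + 1) * ζ)) (𝓝 0) (𝓝 1) := by
  have hlim (n : ℕ) : Tendsto (fun q : ℂ => -(q ^ (n + 1) * ζ)) (𝓝 0) (𝓝 0) := by
    have hcont : Continuous fun q : ℂ => -(q ^ (n + 1) * ζ) := by fun_prop
    simpa using hcont.tendsto 0
  have hbound : ∀ᶠ q : ℂ in 𝓝 0, ∀ n : ℕ, ‖-(q ^ (n + 1) * ζ)‖ ≤ (1 / 2) ^ (n + 1) * ‖ζ‖ := by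
    filter_upwards [Metric.ball_mem_nhds (0 : ℂ) one_half_pos] with q hq n
    rw [norm_neg, norm_mul, norm_pow]
    gcongr
    exact (mem_ball_zero_iff.mp hq).le
  simpa [sub_eq_add_neg] using tendsto_tprod_one_add_of_dominated_convergence
    ((summable_pow_succ one_half_pos.le one_half_lt_one).mul_right ‖ζ‖) hlim hbound

/- The prefactor `exp (πiτ/4)` of `ϑ` cancels against that of `η³`. -/
theorem jtheta_div_dedekindEta_pow_three_s16 {τ : ℂ} (hτ : 0 < τ.im) (z : ℂ) :
    jtheta τ z / dedekindEta τ ^ 3 = 2 * I * Complex.sin (Real.pi * z) *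
      ((∏' n : ℕ, (1 - Periodic.qParam 1 τ ^ (n + 1) * cexp (2 * Real.pi * I * z))) *
        (∏' n : ℕ, (1 - Periodic.qParam 1 τ ^ (n + 1) * cexp (-(2 * Real.pi * I * z)))) *
        (∏' n : ℕ, (1 - Periodic.qParam 1 τ ^ (n + 1) * 1)) /
        (∏' n : ℕ, (1 - Periodic.qParam 1 τ ^ (n + 1) * 1)) ^ 3) := by
  have hq : ‖Periodic.qParam 1 τ‖ < 1 := by
    simpa using UpperHalfPlane.norm_qParam_lt_one 1 ⟨τ, hτ⟩
  have hpow (n : ℕ) : cexp (2 * Real.pi * I * (n + 1) * τ) = Periodic.qParam 1 τ ^ (n + 1) := by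
    rw [qParam_one_pow, Nat.cast_succ]
  have hexp : cexp (Real.pi * I * τ / 12) ^ 3 = cexp (Real.pi * I * τ / 4) := by
    rw [← Complex.exp_nat_mul]
    ring_nf
  have hsin : cexp (Real.pi * I * z) - cexp (-(Real.pi * I * z)) =
      2 * I * Complex.sin (Real.pi * z) := by
    rw [Complex.sin]
    ring_nf
    rw [I_sq]
    ring_nf
  have hmul := multipliable_one_sub_pow_succ_mul hq
  have hmul_one := hmul 1
  simp only [mul_one] at hmul_one ⊢
  simp only [jtheta, dedekindEta, hpow, hsin, mul_pow, hexp]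
  rw [((hmul _).mul (hmul _)).tprod_mul hmul_one, (hmul _).tprod_mul (hmul _),
    mul_assoc (cexp (Real.pi * I * τ / 4)), mul_div_mul_left _ _ (Complex.exp_ne_zero _),
    mul_div_assoc]

theorem tendsto_jtheta_div_dedekindEta_pow_three (z : ℂ) :
    Tendsto (fun τ : ℍ => jtheta τ z / dedekindEta τ ^ 3) atImInfty
      (𝓝 (2 * I * Complex.sin (Real.pi * z))) := by
  have hprod (ζ : ℂ) :=
    (tendsto_tprod_one_sub_pow_succ_mul ζ).comp (UpperHalfPlane.qParam_tendsto_atImInfty one_pos)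
  have hlim := ((((hprod (cexp (2 * Real.pi * I * z))).mul
    (hprod (cexp (-(2 * Real.pi * I * z))))).mul (hprod 1)).div
      ((hprod 1).pow 3) (by simp)).const_mul (2 * I * Complex.sin (Real.pi * z))
  rw [one_pow, div_one, mul_one, mul_one, mul_one] at hlim
  exact hlim.congr fun τ => (jtheta_div_dedekindEta_pow_three_s16 τ.im_pos z).symm

/-- Linear forms diagonalizing the `E₈` quadratic form, obtained by completing squares along the
three arms of the Dynkin diagram towards the branch node `4`. -/
def diagFormE8 (r : Fin 8 → ℤ) : Fin 8 → ℤ :=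
  ![2 * r 0 - r 1, 3 * r 1 - 2 * r 2, 4 * r 2 - 3 * r 3, 5 * r 3 - 4 * r 4, r 4,
    3 * r 5 - 2 * r 4, 2 * r 6 - r 5, 2 * r 7 - r 4]

theorem sixty_mul_pairE8_self (r : Fin 8 → ℤ) :
    60 * pairE8 r r = ∑ i, ![30, 10, 5, 3, 2, 10, 30, 30] i * diagFormE8 r i ^ 2 := by
  simp [pairE8, E8Gram, diagFormE8, Fin.sum_univ_eight]
  ring

theorem finite_roots_E8 : {r : Fin 8 → ℤ | pairE8 r r = 2}.Finite := by
  refine (Set.Finite.pi' fun _ : Fin 8 => Set.finite_Icc (-7 : ℤ) 7).subset fun r hr => ?_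
  have hsum := sixty_mul_pairE8_self r
  rw [Set.mem_ofPred.mp hr] at hsum
  have hcoeff (i : Fin 8) : (2 : ℤ) ≤ ![30, 10, 5, 3, 2, 10, 30, 30] i := by
    revert i
    decide
  have hterm (i : Fin 8) : 2 * diagFormE8 r i ^ 2 ≤ 60 * 2 := by
    rw [hsum]
    refine (mul_le_mul_of_nonneg_right (hcoeff i) (sq_nonneg _)).trans ?_
    exact Finset.single_le_sum (f := fun i => ![30, 10, 5, 3, 2, 10, 30, 30] i * diagFormE8 r i ^ 2)
      (fun j _ => mul_nonneg (by linarith [hcoeff j]) (sq_nonneg _)) (Finset.mem_univ i)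
  have hlt (i : Fin 8) : -8 < diagFormE8 r i ∧ diagFormE8 r i < 8 :=
    abs_lt.mp (abs_lt_of_sq_lt_sq (by linarith [hterm i]) (by norm_num))
  simp only [diagFormE8, Fin.isValue, Fin.forall_fin_succ, cons_val_zero, cons_val_succ,
    cons_val_fin_one, forall_const] at hlt
  intro i
  fin_cases i <;> simp only [Fin.reduceFinMk, Fin.isValue, Set.mem_Icc] <;> lia

/-- `i` times the Weyl vector of `E₈`, written in the basis of simple roots: the pairing with a
root is `i` times its height. -/
def weylVectorI : Fin 8 → ℂ := fun j => (![29, 57, 84, 110, 135, 91, 46, 68] j : ℂ) * I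

theorem pairC_weylVectorI (r : Fin 8 → ℤ) :
    pairC E8Gram (zc r) weylVectorI = ((∑ j, r j : ℤ) : ℂ) * I := by
  simp [pairC, E8Gram, zc, weylVectorI, Fin.sum_univ_eight]
  ring

theorem sum_pos_of_posRoot {r : Fin 8 → ℤ} (hr : pairE8 r r = 2 ∧ ∀ i, 0 ≤ r i) :
    0 < ∑ j, r j := by
  refine Fintype.sum_pos (lt_of_le_of_ne hr.2 ?_)
  rintro rfl
  simp [pairE8] at hr

theorem finite_posRoots_E8 : {r : Fin 8 → ℤ | pairE8 r r = 2 ∧ ∀ i, 0 ≤ r i}.Finite :=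
  finite_roots_E8.subset fun _ hr => hr.1

theorem tendsto_PhiE8 (z : Fin 8 → ℂ) :
    Tendsto (fun τ : ℍ => PhiE8 τ z) atImInfty (𝓝 (∏ r ∈ finite_posRoots_E8.toFinset,
      2 * I * Complex.sin (Real.pi * pairC E8Gram (zc r) z))) := by
  refine (tendsto_finsetProd _ fun r _ =>
    tendsto_jtheta_div_dedekindEta_pow_three (pairC E8Gram (zc r) z)).congr fun τ => ?_
  exact (finprod_mem_eq_finite_toFinset_prod _ finite_posRoots_E8).symm

theorem prod_sin_weylVectorI_ne_zero :
    ∏ r ∈ finite_posRoots_E8.toFinset,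
      2 * I * Complex.sin (Real.pi * pairC E8Gram (zc r) weylVectorI) ≠ 0 := by
  refine Finset.prod_ne_zero_iff.mpr fun r hr => mul_ne_zero (by simp) ?_
  rw [Set.Finite.mem_toFinset] at hr
  rw [pairC_weylVectorI, Ne, Complex.sin_eq_zero_iff]
  rintro ⟨k, hk⟩
  have him : ((∑ j, r j : ℤ) : ℝ) = 0 := by
    simpa [Real.pi_ne_zero] using congrArg Complex.im hk
  exact (sum_pos_of_posRoot hr).ne' (Int.cast_eq_zero.mp him)

end ThetaBlock

section LevelOne

open UpperHalfPlane hiding I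
open ModularForm EisensteinSeries MatrixGroups
open scoped Manifold

variable {k : ℤ}

theorem isCuspForm_of_isZeroAtImInfty {F : ModularForm 𝒮ℒ k} (hF : IsZeroAtImInfty F) :
    IsCuspForm F := by
  rw [isCuspForm_iff_coeffZero_eq_zero, qExpansion_coeff_zero one_pos
    (ModularFormClass.analyticAt_cuspFunction_zero F one_pos one_mem_strictPeriods_SL)
    (SlashInvariantFormClass.periodic_comp_ofComplex F one_mem_strictPeriods_SL)]
  exact hF.valueAtInfty_eq_zero

theorem exists_eq_discriminant_mul {F : ModularForm 𝒮ℒ k} (hF : IsCuspForm F) :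
    ∃ G : ModularForm 𝒮ℒ (k - 12), ⇑F = discriminant * ⇑G := by
  obtain ⟨f, rfl⟩ := hF
  exact ⟨CuspForm.discriminantEquiv f, (discriminant_mul_discriminantEquiv f).symm⟩

theorem tendsto_exp_neg_two_pi_mul_im :
    Tendsto (fun τ : ℍ => Real.exp (-2 * Real.pi * τ.im)) atImInfty (𝓝 0) :=
  Real.tendsto_exp_atBot.comp
    (tendsto_comap.const_mul_atTop_of_neg (by linarith [Real.pi_pos]))

theorem exists_eq_discriminant_pow_mul (N : ℕ) {k : ℤ} (F : ModularForm 𝒮ℒ k)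
    (hF : F =O[atImInfty] fun τ => Real.exp (-2 * Real.pi * τ.im) ^ N) :
    ∃ G : ModularForm 𝒮ℒ (k - 12 * N), ⇑F = discriminant ^ N * ⇑G := by
  induction N generalizing k with
  | zero => exact ⟨mcast (by simp) F, by simp⟩
  | succ N ih =>
    have hzero : IsZeroAtImInfty F := hF.trans_tendsto <| by
      simpa using tendsto_exp_neg_two_pi_mul_im.pow (N + 1)
    obtain ⟨G, hG⟩ := exists_eq_discriminant_mul (isCuspForm_of_isZeroAtImInfty hzero)
    have hGO : G =O[atImInfty] fun τ => Real.exp (-2 * Real.pi * τ.im) ^ N := by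
      refine ((exp_isBigO_discriminant.inv_rev ?_).mul hF).congr (fun τ => ?_) fun τ => ?_
      · exact .of_forall fun τ h => absurd h (Real.exp_ne_zero _)
      · rw [hG, Pi.mul_apply, inv_mul_cancel_left₀ (discriminant_ne_zero τ)]
      · rw [pow_succ', inv_mul_cancel_left₀ (Real.exp_ne_zero _)]
    obtain ⟨H, hH⟩ := ih G hGO
    exact ⟨mcast (by push_cast; ring) H, by rw [hG, hH, coe_mcast, pow_succ', mul_assoc]⟩

theorem coeff_qExpansion_eq_zero_of_eq_discriminant_pow_mul {N : ℕ} {k' : ℤ}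
    {F : ModularForm 𝒮ℒ k} {G : ModularForm 𝒮ℒ k'} (hFG : ⇑F = discriminant ^ N * ⇑G) :
    ∀ n < N, (qExpansion 1 F).coeff n = 0 := by
  let D : ModularForm 𝒮ℒ 12 := CuspForm.discriminant
  have hX : PowerSeries.X ∣ qExpansion 1 D :=
    PowerSeries.X_dvd_iff.mpr <| by
      simpa using (isCuspForm_iff_coeffZero_eq_zero D).mp ⟨CuspForm.discriminant, rfl⟩
  have hF : qExpansion 1 F = qExpansion 1 D ^ N * qExpansion 1 G := by
    rw [← ModularForm.qExpansion_pow one_pos one_mem_strictPeriods_SL,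
      ← ModularForm.qExpansion_mul_coe one_pos one_mem_strictPeriods_SL, hFG, coe_pow]
    rfl
  rw [← PowerSeries.X_pow_dvd_iff, hF]
  exact (pow_dvd_pow_of_dvd hX N).mul_right _

theorem exists_qExpansion_coeff_zero_eq_one {w : ℕ} (hw : Even w) (hw2 : w ≠ 2) :
    ∃ P : ModularForm 𝒮ℒ w, (qExpansion 1 P).coeff 0 = 1 := by
  rcases Nat.eq_zero_or_pos w with rfl | hpos
  · exact ⟨(1 : ModularForm 𝒮ℒ 0), by simp [UpperHalfPlane.qExpansion_one]⟩
  · exact ⟨E (by grind), E_qExpansion_coeff_zero _ hw⟩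

theorem eq_zero_of_odd_or_lt_four (hk : ¬ 3 ∣ k) (h : Odd k ∨ k < 4) (F : ModularForm 𝒮ℒ k) :
    F = 0 := by
  rcases Int.even_or_odd k with heven | hodd
  · obtain hneg | rfl : k < 0 ∨ k = 2 := by grind
    · exact rank_zero_iff_forall_zero.mp (levelOne_neg_weight_rank_zero hneg) F
    · exact rank_zero_iff_forall_zero.mp levelOne_weight_two_rank_zero F
  · exact levelOne_odd_weight_eq_zero hodd F

/- Modulo cusp forms, i.e. modulo `Δ`-multiples of forms of weight `k - 12`, every form of weight
`k` is a multiple of `E₄ P`, where `P` has weight `k - 4` and constant term `1`; such a `P` exists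
unless `k - 4 = 2`, which `3 ∤ k` excludes. -/
theorem exists_eq_E₄_mul (hk : ¬ 3 ∣ k) (F : ModularForm 𝒮ℒ k) :
    ∃ H : ModularForm 𝒮ℒ (k - 4), ⇑F = E₄ * ⇑H := by
  obtain ⟨N, hN⟩ : ∃ N : ℕ, k < 4 + 12 * N := ⟨k.toNat, by grind⟩
  induction N generalizing k with
  | zero => exact ⟨0, by simp [eq_zero_of_odd_or_lt_four hk (.inr (by grind)) F]⟩
  | succ N ih =>
    by_cases hzero : Odd k ∨ k < 4
    · exact ⟨0, by simp [eq_zero_of_odd_or_lt_four hk hzero F]⟩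
    obtain ⟨w, rfl⟩ : ∃ w : ℕ, k = 4 + w := ⟨(k - 4).toNat, by grind⟩
    obtain ⟨P, hP⟩ := exists_qExpansion_coeff_zero_eq_one (w := w) (by grind) (by grind)
    have hE₄P : (qExpansion 1 (E₄.mul P)).coeff 0 = 1 := by
      rw [ModularForm.qExpansion_mul one_pos one_mem_strictPeriods_SL, PowerSeries.coeff_mul,
        Finset.Nat.antidiagonal_zero, Finset.sum_singleton, hP, mul_one]
      exact E_qExpansion_coeff_zero (by norm_num) ⟨2, rfl⟩
    obtain ⟨G, hG⟩ := exists_eq_discriminant_mul (sub_smul_isCuspForm F (E₄.mul P) hE₄P)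
    obtain ⟨H, hH⟩ := ih (by grind) G (by grind)
    set c := (qExpansion 1 F).coeff 0
    refine ⟨mcast (by ring) (c • P) +
      mcast (by ring) ((CuspForm.discriminant : ModularForm 𝒮ℒ 12).mul H), ?_⟩
    have hF : ⇑F = c • (⇑E₄ * ⇑P) + discriminant * (⇑E₄ * ⇑H) := by
      rw [← hH, ← hG, FunLike.coe_sub, FunLike.coe_smul, coe_mul, add_sub_cancel]
    rw [hF, FunLike.coe_add, coe_mcast, coe_mcast, FunLike.coe_smul, coe_mul, mul_add,
      mul_smul_comm, mul_left_comm]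
    rfl

end LevelOne

section IsModularForm

open UpperHalfPlane hiding I
open ModularForm EisensteinSeries MatrixGroups
open scoped Manifold

variable {k : ℤ} {f : ℂ → ℂ}

theorem slash_apply_eq_iff (γ : SL(2, ℤ)) (τ : ℍ) :
    ((fun τ : ℍ => f τ) ∣[k] γ) τ = f τ ↔
      f ((γ 0 0 * τ + γ 0 1) / (γ 1 0 * τ + γ 1 1)) = (γ 1 0 * τ + γ 1 1 : ℂ) ^ k * f τ := by
  rw [ModularForm.slash_action_eq'_iff, UpperHalfPlane.coe_specialLinearGroup_apply]
  simp

theorem IsModularForm.exists_modularForm (hf : IsModularForm k f) :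
    ∃ F : ModularForm 𝒮ℒ k, ∀ τ : ℍ, F τ = f τ := by
  obtain ⟨hd, ht, c, hsum⟩ := hf
  have hslash (γ : SL(2, ℤ)) : (fun τ : ℍ => f τ) ∣[k] γ = fun τ : ℍ => f τ := by
    ext τ
    have hdet : γ 0 0 * γ 1 1 - γ 0 1 * γ 1 0 = 1 := by
      rw [← Matrix.det_fin_two, γ.det_coe]
    exact (slash_apply_eq_iff γ τ).mpr (ht _ _ _ _ hdet τ τ.im_pos)
  refine ⟨{ toFun := fun τ => f τ
            slash_action_eq' := fun _ ⟨γ, hγ⟩ => hγ ▸ hslash γ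
            holo' := ?_
            bdd_at_cusps' := fun {x} hx => ?_ }, fun τ => rfl⟩
  · exact UpperHalfPlane.mdifferentiable_iff.mpr <| hd.congr fun τ hτ => by
      simp [ofComplex_apply_of_im_pos hτ]
  · rw [Subgroup.IsArithmetic.isCusp_iff_isCusp_SL2Z] at hx
    refine (OnePoint.isBoundedAt_iff_forall_SL2Z hx).mpr fun γ _ => ?_
    rw [hslash γ]
    refine isBoundedAtImInfty_of_hasSum_qExpansion (h := 1) (c := c) one_pos fun τ => ?_
    simpa only [qParam_one_pow, smul_eq_mul] using hsum τ τ.im_pos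

theorem hasSum_qExpansion_coeff_mul_cexp (F : ModularForm 𝒮ℒ k) (hF : ∀ τ : ℍ, F τ = f τ)
    {τ : ℂ} (hτ : 0 < τ.im) :
    HasSum (fun n : ℕ => (qExpansion 1 F).coeff n *
      cexp (2 * (Real.pi : ℂ) * I * (n : ℂ) * τ)) (f τ) := by
  have hsum := ModularForm.hasSum_qExpansion F one_pos one_mem_strictPeriods_SL ⟨τ, hτ⟩
  simpa only [qParam_one_pow, hF] using hsum

theorem isModularForm_of_modularForm (F : ModularForm 𝒮ℒ k) (hF : ∀ τ : ℍ, F τ = f τ) :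
    IsModularForm k f := by
  refine ⟨?_, fun a b c d hdet τ hτ => ?_, _, fun _ => hasSum_qExpansion_coeff_mul_cexp F hF⟩
  · refine (UpperHalfPlane.mdifferentiable_iff.mp F.holo').congr fun τ hτ => ?_
    simpa [ofComplex_apply_of_im_pos hτ] using (hF ⟨τ, hτ⟩).symm
  · let γ : SL(2, ℤ) := ⟨!![a, b; c, d], by rw [Matrix.det_fin_two]; simpa using hdet⟩
    have hslash := SlashInvariantForm.slash_action_eqn F (γ : GL (Fin 2) ℝ) ⟨γ, rfl⟩
    rw [← ModularForm.SL_slash, funext hF] at hslash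
    simpa [γ] using (slash_apply_eq_iff γ ⟨τ, hτ⟩).mp (congrFun hslash _)

theorem discriminant_eq_dedekindEta_pow (τ : ℍ) : discriminant τ = dedekindEta τ ^ 24 := by
  have hexp : Function.Periodic.qParam 24 (τ : ℂ) = cexp (Real.pi * I * τ / 12) := by
    rw [Function.Periodic.qParam]
    congr 1
    push_cast
    ring
  simp only [discriminant, ModularForm.eta, eta_q_eq_cexp, hexp, dedekindEta]

theorem dedekindEta_ne_zero {τ : ℂ} (hτ : 0 < τ.im) : dedekindEta τ ≠ 0 := by
  have hΔ := discriminant_ne_zero ⟨τ, hτ⟩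
  rw [discriminant_eq_dedekindEta_pow] at hΔ
  exact right_ne_zero_of_mul (pow_succ (dedekindEta τ) 23 ▸ hΔ)

theorem E₄_eq_E4 (τ : ℍ) : E₄ τ = E4 τ := by
  have hb : bernoulli 4 = -1 / 30 := by
    rw [bernoulli_eq_bernoulli'_of_ne_one (by norm_num), bernoulli'_four]
  have hexp (n : ℕ) : cexp (2 * Real.pi * I * τ) ^ (n + 1) =
      cexp (2 * (Real.pi : ℂ) * I * ((n : ℂ) + 1) * τ) := by
    rw [← Complex.exp_nat_mul]
    push_cast
    ring_nf
  rw [q_expansion_bernoulli (by norm_num) ⟨2, rfl⟩ τ, E4, hb]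
  simp only [zpow_natCast]
  rw [tsum_pnat_eq_tsum_succ
    (f := fun n => (ArithmeticFunction.sigma (4 - 1) n : ℂ) * cexp (2 * Real.pi * I * τ) ^ n)]
  simp only [hexp]
  norm_num

theorem IsModularForm.exists_hasSum_coeff_eq_zero (hf : IsModularForm k f) {N : ℕ}
    (hO : (fun τ : ℍ => f τ) =O[atImInfty] fun τ => Real.exp (-2 * Real.pi * τ.im) ^ N) :
    ∃ c : ℕ → ℂ, (∀ τ : ℂ, 0 < τ.im →
      HasSum (fun n : ℕ => c n * cexp (2 * (Real.pi : ℂ) * I * (n : ℂ) * τ)) (f τ)) ∧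
      ∀ n < N, c n = 0 := by
  obtain ⟨F, hF⟩ := hf.exists_modularForm
  obtain ⟨G, hG⟩ := exists_eq_discriminant_pow_mul N F (hO.congr_left fun τ => (hF τ).symm)
  exact ⟨_, fun _ => hasSum_qExpansion_coeff_mul_cexp F hF,
    coeff_qExpansion_eq_zero_of_eq_discriminant_pow_mul hG⟩

theorem IsModularForm.div_dedekindEta_pow (hf : IsModularForm k f) {N : ℕ}
    (hO : (fun τ : ℍ => f τ) =O[atImInfty] fun τ => Real.exp (-2 * Real.pi * τ.im) ^ N) :
    IsModularForm (k - 12 * N) fun τ => f τ / dedekindEta τ ^ (24 * N) := by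
  obtain ⟨F, hF⟩ := hf.exists_modularForm
  obtain ⟨G, hG⟩ := exists_eq_discriminant_pow_mul N F (hO.congr_left fun τ => (hF τ).symm)
  refine isModularForm_of_modularForm G fun τ => ?_
  rw [← hF, hG, pow_mul, ← discriminant_eq_dedekindEta_pow, Pi.mul_apply, Pi.pow_apply,
    mul_div_cancel_left₀ _ (pow_ne_zero N (discriminant_ne_zero τ))]

theorem IsModularForm.exists_eq_E4_mul (hk : ¬ 3 ∣ k) (hf : IsModularForm k f) :
    ∃ h : ℂ → ℂ, IsModularForm (k - 4) h ∧ ∀ τ : ℂ, 0 < τ.im → f τ = E4 τ * h τ := by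
  obtain ⟨F, hF⟩ := hf.exists_modularForm
  obtain ⟨H, hH⟩ := exists_eq_E₄_mul hk F
  refine ⟨fun τ => H (ofComplex τ), isModularForm_of_modularForm H fun τ => by simp,
    fun τ hτ => ?_⟩
  beta_reduce
  rw [ofComplex_apply_of_im_pos hτ, ← E₄_eq_E4 ⟨τ, hτ⟩, ← hF ⟨τ, hτ⟩, hH, Pi.mul_apply]

end IsModularForm

section Main

variable {m : Fin 9 → ℕ} {F : Fin 9 → ℂ → (Fin 8 → ℂ) → ℂ} {g : ℂ → ℂ}

theorem isBigO_of_jacJacobian_eq_mul_PhiE8 (hF : ∀ j, HasUnitQZeroTerm E8Gram (F j))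
    (hgdef : ∀ τ : ℂ, 0 < τ.im → ∀ z, jacJacobian m F τ z = g τ * PhiE8 τ z) :
    (fun τ : ℍ => g τ) =O[atImInfty] fun τ => Real.exp (-2 * Real.pi * τ.im) ^ 8 := by
  have hPhi := tendsto_PhiE8 weylVectorI
  have hJ := (jacJacobian_isBigO hF m weylVectorI).mul
    ((hPhi.inv₀ prod_sin_weylVectorI_ne_zero).isBigO_one ℝ)
  refine hJ.congr' ?_ (.of_forall fun τ => mul_one _)
  filter_upwards [hPhi.eventually_ne prod_sin_weylVectorI_ne_zero] with τ hτ
  rw [hgdef τ τ.im_pos, mul_inv_cancel_right₀ hτ]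

theorem E8_g_divisible_by_Delta8_E4_general {k : ℤ} (hk : ¬ 3 ∣ k)
    (hF : ∀ j, HasUnitQZeroTerm E8Gram (F j))
    (hgdef : ∀ τ : ℂ, 0 < τ.im → ∀ z, jacJacobian m F τ z = g τ * PhiE8 τ z)
    (hg : IsModularForm k g) :
    (∃ c : ℕ → ℂ, (∀ τ : ℂ, 0 < τ.im →
      HasSum (fun n : ℕ => c n * cexp (2 * (Real.pi : ℂ) * I * (n : ℂ) * τ)) (g τ)) ∧
      ∀ n < 8, c n = 0) ∧
    IsModularForm (k - 96) (fun τ => g τ / dedekindEta τ ^ 192) ∧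
    ∃ h : ℂ → ℂ, IsModularForm (k - 100) h ∧
      ∀ τ : ℂ, 0 < τ.im → g τ = dedekindEta τ ^ 192 * E4 τ * h τ := by
  have hO := isBigO_of_jacJacobian_eq_mul_PhiE8 hF hgdef
  have hquot : IsModularForm (k - 96) fun τ => g τ / dedekindEta τ ^ 192 := by
    simpa using hg.div_dedekindEta_pow hO
  obtain ⟨h, hh, hquot_eq⟩ := hquot.exists_eq_E4_mul (by lia)
  refine ⟨hg.exists_hasSum_coeff_eq_zero hO, hquot, h, by simpa [sub_sub] using hh,
    fun τ hτ => ?_⟩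
  rw [mul_assoc, ← hquot_eq τ hτ, mul_div_cancel₀ _ (pow_ne_zero _ (dedekindEta_ne_zero hτ))]

end Main


/-- The modular form `g = J(A_1,…,B_6)/Φ_{E_8} ∈ M_172(SL₂(ℤ))` has
Fourier expansion `O(q^8)`, so `g/Δ^8 ∈ M_76(SL₂(ℤ))`; consequently `g = Δ^8·E_4·h` for
some modular form `h` of weight `72` on `SL₂(ℤ)`, where `Δ = η^24`. -/
theorem E8_g_divisible_by_Delta8_E4
    (F : Fin 9 → ℂ → (Fin 8 → ℂ) → ℂ)
    (hF : ∀ j, IsWeakJacobiForm E8Gram (sakaiWt j) (sakaiIdx j) (F j))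
    (hFG : ∀ j, GInvariant weylE8 (F j))
    (hFhol : ∀ j, ∃ c : ℕ → (Fin 8 → ℚ) → ℂ, FourierRep E8Gram (F j) c ∧
      (∀ (n : ℕ) (ℓ : Fin 8 → ℚ), c n ℓ ≠ 0 → pairQ E8Gram ℓ ℓ ≤ 2 * n * sakaiIdx j) ∧
      (∀ ℓ : Fin 8 → ℚ, c 0 ℓ = if ℓ = 0 then 1 else 0))
    (hFind : AlgIndepOverM F)
    (g : ℂ → ℂ)
    (hgdef : ∀ τ : ℂ, 0 < τ.im → ∀ z : Fin 8 → ℂ,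
      jacJacobian sakaiIdx F τ z = g τ * PhiE8 τ z)
    (hg : IsModularForm 172 g) :
    (∃ cf : ℕ → ℂ,
      (∀ τ : ℂ, 0 < τ.im →
        HasSum (fun n : ℕ => cf n * Complex.exp (2 * (Real.pi : ℂ) * Complex.I * (n : ℂ) * τ))
          (g τ)) ∧
      ∀ n < 8, cf n = 0) ∧
    IsModularForm 76 (fun τ => g τ / dedekindEta τ ^ 192) ∧
    ∃ h : ℂ → ℂ, IsModularForm 72 h ∧
      ∀ τ : ℂ, 0 < τ.im → g τ = dedekindEta τ ^ 192 * E4 τ * h τ :=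
  E8_g_divisible_by_Delta8_E4_general (by norm_num)
    (fun j => let ⟨c, hc, _, hc₀⟩ := hFhol j; ⟨c, hc, hc₀⟩) hgdef hg

end
end
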